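/- arXiv:2604.14681 — 3 statements merged into one kernel-verified Lean document; each statement's English description precedes it below -/
import Mathlib

section
/- (Proposition 3.4.) Let d ≥ 1. Let ρ^{(1)} : ℝ^d → (0,∞) be measurable, let ρ^{(2)} : (ℝ^d)² → ℝ be symmetric measurable, and let (ρ_T^{(n)})_{n≥1} be symmetric measurable functions ρ_T^{(n)} : (ℝ^d)^n → ℝ with ρ_T^{(1)} = ρ^{(1)} and ρ^{(2)} = ρ_T^{(2)} + ρ^{(1)}⊗ρ^{(1)}. Assume there are constants M, A, D_ρ > 0 such that for every bounded measurable Λ ⊆ ℝ^d, every k ≥ 1, every m ∈ {1,2} and all x₁,…,x_m ∈ ℝ^d: ∫_{Λ^k} |ρ_T^{(m+k)}(x₁,…,x_m,y₁,…,y_k)| dy ≤ (m+k−1)! · M · A^m · D_ρ^k · ∏_{i=1}^{m} ρ^{(1)}(x_i); and assume there is d₀ > 0 such that ρ^{(1)}(x₁)ρ^{(1)}(x₂) ≤ d₀ · ρ^{(2)}(x₁,x₂) for all x₁, x₂ ∈ ℝ^d (in particular ρ^{(2)} > 0). For x₁, x₂ ∈ ℝ^d define the family (ω^{(k)}(x₁,x₂;·))_{k≥1}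 by the recursion: ω^{(1)}(x₁,x₂;y) = ρ_T^{(3)}(x₁,x₂,y)/ρ^{(2)}(x₁,x₂), and for k ≥ 2, ω^{(k)}(x₁,x₂;y₁,…,y_k) = ρ_T^{(2+k)}(x₁,x₂,y)/ρ^{(2)}(x₁,x₂) − (ρ_T^{(2)}(x₁,x₂)/ρ^{(2)}(x₁,x₂)) Σ_{(σ₁,σ₂)} [ρ_T^{(1+|σ₁|)}(x₁,y_{σ₁})/ρ^{(1)}(x₁)][ρ_T^{(1+|σ₂|)}(x₂,y_{σ₂})/ρ^{(1)}(x₂)] − Σ_{(σ₁,σ₂,σ₃), 0<|σ₃|<k} [ρ_T^{(1+|σ₁|)}(x₁,y_{σ₁})/ρ^{(1)}(x₁)][ρ_T^{(1+|σ₂|)}(x₂,y_{σ₂})/ρ^{(1)}(x₂)] Σ_{l=1}^{|σ₃|}(1/l!)Σ_{π∈Π_l(σ₃)}∏_{i=1}^{l} ω^{(|π_i|)}(x₁,x₂;y_{π_i}) − Σ_{l=2}^{k}(1/l!)Σ_{π∈Π_l({1,…,k})}∏_{i=1}^{l} ω^{(|π_i|)}(x₁,x₂;y_{π_i}). Then there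 exist constants Ĉ₂ > 0 and χ > 0, depending only on M, A and d₀ (and not on D_ρ, Λ, x₁, x₂), such that for every bounded measurable Λ ⊆ ℝ^d, every k ≥ 1 and all x₁, x₂ ∈ ℝ^d: ∫_{Λ^k} |ω^{(k)}(x₁,x₂;y₁,…,y_k)| dy ≤ k! · Ĉ₂ · D_ρ^k · χ^k. -/
open MeasureTheory Finset

abbrev CF (E : Type) : Type := (n : ℕ) → (Fin n → E) → ℝ

namespace CF

variable {E : Type}

/-- Symmetry of a configuration functional under permutations of the arguments. -/
def IsSymm (F : CF E) : Prop :=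
  ∀ (n : ℕ) (σ : Equiv.Perm (Fin n)) (x : Fin n → E), F n (x ∘ σ) = F n x

/-- The subtuple of `x` with indices in `I`, listed in increasing order. -/
noncomputable def sub {n : ℕ} (x : Fin n → E) (I : Finset (Fin n)) : Fin I.card → E :=
  fun i => x (I.orderIsoOfFin rfl i).1

/-- The convolution `Ψ ∗ Φ`. -/
noncomputable def conv (Ψ Φ : CF E) : CF E :=
  fun n x => ∑ I : Finset (Fin n), Ψ I.card (sub x I) * Φ Iᶜ.card (sub x Iᶜ)

/-- The unit `𝟙`. -/
def unit : CF E := fun n _ => if n = 0 then 1 else 0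

/-- Star-powers `Φ^{∗m}`. -/
noncomputable def starPow (Φ : CF E) : ℕ → CF E
  | 0 => unit
  | m + 1 => conv Φ (starPow Φ m)

/-- The star-exponential `exp∗ Φ = 𝟙 + Σ_{m≥1} Φ^{∗m}/m!`; on `A₀` the sum in the
`n`-th component is finite since `(Φ^{∗m})^{(n)} = 0` for `m > n`. -/
noncomputable def starExp (Φ : CF E) : CF E :=
  fun n x => ∑ m ∈ Finset.range (n + 1), ((m.factorial : ℝ))⁻¹ * starPow Φ m n x

/-- The derivative `D_x`. -/
noncomputable def D (x : E) (Φ : CF E) : CF E := fun n y => Φ (n + 1) (Fin.cons x y)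

/-- The second derivative `D_{x₁,x₂} = D_{x₁} ∘ D_{x₂}`. -/
noncomputable def D2 (x₁ x₂ : E) (Φ : CF E) : CF E := D x₁ (D x₂ Φ)

end CF

namespace CF

/-- Ordered partitions of the subset `S ⊆ {1,…,n}` into `l` nonempty, pairwise
disjoint parts whose union is `S`. -/
def ordPartsOf (l : ℕ) {n : ℕ} (S : Finset (Fin n)) : Finset (Fin l → Finset (Fin n)) :=
  Finset.univ.filter fun π =>
    (∀ i, (π i).Nonempty) ∧ (∀ i j, i ≠ j → Disjoint (π i) (π j)) ∧
      (∀ a, a ∈ S ↔ ∃ i, a ∈ π i)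

/-- Set partitions of `{1,…,n}` into nonempty blocks, encoded as the finset of blocks. -/
def setPartitions (n : ℕ) : Finset (Finset (Finset (Fin n))) :=
  Finset.univ.filter fun P =>
    (∀ B ∈ P, B.Nonempty) ∧ (∀ B ∈ P, ∀ B' ∈ P, B ≠ B' → Disjoint B B') ∧
      (∀ a : Fin n, ∃ B ∈ P, a ∈ B)

end CF
/-- Euclidean space `ℝ^d`. -/
abbrev Euc (d : ℕ) : Type := EuclideanSpace ℝ (Fin d)

/-- The product measure on `Λ^n ⊆ (ℝ^d)^n` (Lebesgue measure restricted to `Λ`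
in each coordinate). -/
noncomputable def piRestrict (d : ℕ) (Λ : Set (Euc d)) (n : ℕ) :
    MeasureTheory.Measure (Fin n → Euc d) :=
  MeasureTheory.Measure.pi fun _ => MeasureTheory.volume.restrict Λ

/-- Lebesgue measure on `(ℝ^d)^n`. -/
noncomputable def piVol (d : ℕ) (n : ℕ) : MeasureTheory.Measure (Fin n → Euc d) :=
  MeasureTheory.Measure.pi fun _ => MeasureTheory.volume

section Aux

open scoped ENNReal

theorem aux_lintegral_fin_prod {n : ℕ} {E : Fin n → Type*}
    {mE : ∀ i, MeasurableSpace (E i)} {μ : (i : Fin n) → Measure (E i)} [∀ i, SigmaFinite (μ i)]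
    (f : (i : Fin n) → E i → ℝ≥0∞) (hf : ∀ i, Measurable (f i)) :
    ∫⁻ x : (i : Fin n) → E i, ∏ i, f i (x i) ∂(Measure.pi μ) = ∏ i, ∫⁻ x, f i x ∂(μ i) := by
  induction n with
  | zero => simp
  | succ n n_ih =>
      calc
        _ = ∫⁻ x : E 0 × ((i : Fin n) → E (Fin.succ i)),
            f 0 x.1 * ∏ i : Fin n, f (Fin.succ i) (x.2 i)
            ∂((μ 0).prod (Measure.pi (fun i ↦ μ i.succ))) := by
          have := (measurePreserving_piFinSuccAbove μ 0).lintegral_comp_emb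
            (MeasurableEquiv.measurableEmbedding _)
            (fun x : E 0 × ((i : Fin n) → E (Fin.succ i)) =>
              f 0 x.1 * ∏ i : Fin n, f (Fin.succ i) (x.2 i))
          refine Eq.trans ?_ this
          refine lintegral_congr fun x => ?_
          rw [Fin.prod_univ_succ]
          rfl
        _ = (∫⁻ x, f 0 x ∂μ 0)
            * ∏ i : Fin n, ∫⁻ (x : E (Fin.succ i)), f (Fin.succ i) x ∂(μ i.succ) := by
          rw [← n_ih _ (fun i => hf _), ← lintegral_prod_mul (hf 0).aemeasurable]
          refine Measurable.aemeasurable ?_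
          refine Finset.measurable_fun_prod _ fun i _ => (hf _).comp (measurable_pi_apply i)
        _ = ∏ i, ∫⁻ x, f i x ∂(μ i) := by rw [Fin.prod_univ_succ]

theorem aux_block_integral {X : Type} [MeasurableSpace X] (μ : Measure X) [SigmaFinite μ]
    {k l : ℕ} (π : Fin l → Finset (Fin k))
    (hdis : ∀ i j, i ≠ j → Disjoint (π i) (π j)) (hcov : ∀ a, ∃ i, a ∈ π i)
    (F : (i : Fin l) → (Fin (π i).card → X) → ℝ≥0∞) (hF : ∀ i, Measurable (F i)) :
    ∫⁻ y, ∏ i, F i (CF.sub y (π i)) ∂(Measure.pi fun _ : Fin k => μ) =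
      ∏ i, ∫⁻ z, F i z ∂(Measure.pi fun _ : Fin (π i).card => μ) := by
  classical
  let e0 : (Σ i : Fin l, Fin (π i).card) → Fin k := fun p => ((π p.1).orderIsoOfFin rfl p.2).1
  have he0 : Function.Bijective e0 := by
    constructor
    · rintro ⟨i, a⟩ ⟨j, b⟩ h
      have hi : e0 ⟨i, a⟩ ∈ π i := ((π i).orderIsoOfFin rfl a).2
      have hj : e0 ⟨j, b⟩ ∈ π j := ((π j).orderIsoOfFin rfl b).2
      have hij : i = j := by
        by_contra hne
        exact Finset.disjoint_left.1 (hdis i j hne) hi (h ▸ hj)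
      subst hij
      have : a = b := by
        apply ((π i).orderIsoOfFin rfl).injective
        exact Subtype.ext h
      rw [this]
    · intro a
      obtain ⟨i, hi⟩ := hcov a
      refine ⟨⟨i, ((π i).orderIsoOfFin rfl).symm ⟨a, hi⟩⟩, ?_⟩
      exact congrArg Subtype.val (((π i).orderIsoOfFin rfl).apply_symm_apply ⟨a, hi⟩)
  let e := Equiv.ofBijective e0 he0
  let G : ((i : Fin l) → (Fin (π i).card → X)) → (Fin k → X) :=
    fun z a => z (e.symm a).1 (e.symm a).2
  have hG : Measurable G := by
    refine measurable_pi_lambda _ fun a => ?_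
    exact (measurable_pi_apply _).comp (measurable_pi_apply _)
  have hsub : ∀ z i, CF.sub (G z) (π i) = z i := by
    intro z i
    funext j
    have : e.symm (e ⟨i, j⟩) = ⟨i, j⟩ := e.symm_apply_apply _
    change z (e.symm (e ⟨i, j⟩)).1 (e.symm (e ⟨i, j⟩)).2 = z i j
    rw [this]
  have hmap : Measure.map G (Measure.pi fun i => Measure.pi fun _ : Fin (π i).card => μ)
      = Measure.pi fun _ : Fin k => μ := by
    symm
    refine Measure.pi_eq fun s hs => ?_
    rw [Measure.map_apply hG (MeasurableSet.univ_pi hs)]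
    have : G ⁻¹' (Set.univ.pi s) =
        Set.univ.pi fun i => Set.univ.pi fun j => s (e ⟨i, j⟩) := by
      ext z
      simp only [Set.mem_preimage, Set.mem_univ_pi]
      constructor
      · intro h i j
        have := h (e ⟨i, j⟩)
        have h2 : e.symm (e ⟨i, j⟩) = ⟨i, j⟩ := e.symm_apply_apply _
        change z (e.symm (e ⟨i, j⟩)).1 (e.symm (e ⟨i, j⟩)).2 ∈ _ at this
        rwa [h2] at this
      · intro h a
        have := h (e.symm a).1 (e.symm a).2
        simpa [G] using this
    rw [this, Measure.pi_pi]
    simp_rw [Measure.pi_pi]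
    rw [← e.prod_comp, Fintype.prod_sigma]
  have hmeas : ∀ i, Measurable fun y : Fin k → X => CF.sub y (π i) := by
    intro i
    exact measurable_pi_lambda _ fun a => measurable_pi_apply _
  rw [← hmap, lintegral_map _ hG]
  · simp_rw [hsub]
    exact aux_lintegral_fin_prod F hF
  · exact Finset.measurable_fun_prod _ fun i _ => (hF i).comp (hmeas i)

/-- exponential convolution of sequences -/
noncomputable def auxConv (a b : ℕ → ℝ≥0∞) (n : ℕ) : ℝ≥0∞ :=
  ∑ j ∈ Finset.range (n + 1), (n.choose j : ℝ≥0∞) * (a j * b (n - j))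

noncomputable def auxN (w : ℝ≥0∞) (a : ℕ → ℝ≥0∞) : ℝ≥0∞ :=
  ∑' n : ℕ, w ^ n * (n.factorial : ℝ≥0∞)⁻¹ * a n

noncomputable def auxPow (g : ℕ → ℝ≥0∞) : ℕ → ℕ → ℝ≥0∞
  | 0 => fun n => if n = 0 then 1 else 0
  | l + 1 => auxConv g (auxPow g l)

theorem aux_tsum_mul (f g : ℕ → ℝ≥0∞) :
    ((∑' n, f n) * ∑' n, g n) = ∑' n, ∑ kl ∈ Finset.HasAntidiagonal.antidiagonal n, f kl.1 * g kl.2 := by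
  have h1 : ((∑' n, f n) * ∑' n, g n) = ∑' p : ℕ × ℕ, f p.1 * g p.2 := by
    rw [ENNReal.tsum_prod']
    simp_rw [ENNReal.tsum_mul_left, ENNReal.tsum_mul_right]
  rw [h1, ← Finset.HasAntidiagonal.sigmaAntidiagonalEquivProd.tsum_eq, ENNReal.tsum_sigma']
  refine tsum_congr fun n => ?_
  rw [tsum_fintype, ← Finset.sum_coe_sort (Finset.HasAntidiagonal.antidiagonal n)]
  rfl

theorem aux_sum_le_of_inj {α β : Type*} (s : Finset α) (t : Finset β) (φ : α → β)
    (hφ : ∀ x ∈ s, ∀ y ∈ s, φ x = φ y → x = y) (hm : ∀ x ∈ s, φ x ∈ t) (F : β → ℝ≥0∞) :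
    ∑ x ∈ s, F (φ x) ≤ ∑ y ∈ t, F y := by
  classical
  rw [← Finset.sum_image (f := F) (g := φ) (s := s) (fun x hx y hy h => hφ x hx y hy h)]
  refine Finset.sum_le_sum_of_subset ?_
  intro y hy
  obtain ⟨x, hx, rfl⟩ := Finset.mem_image.1 hy
  exact hm x hx

theorem auxN_conv (w : ℝ≥0∞) (a b : ℕ → ℝ≥0∞) :
    auxN w (auxConv a b) = auxN w a * auxN w b := by
  unfold auxN
  rw [aux_tsum_mul]
  refine tsum_congr fun n => ?_
  rw [auxConv, Finset.mul_sum, Finset.Nat.sum_antidiagonal_eq_sum_range_succ_mk]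
  refine Finset.sum_congr rfl fun j hj => ?_
  have hj' : j ≤ n := Nat.lt_succ_iff.1 (Finset.mem_range.1 hj)
  have h1 : (n.factorial : ℝ≥0∞)⁻¹ * (n.choose j : ℝ≥0∞)
      = (j.factorial : ℝ≥0∞)⁻¹ * ((n - j).factorial : ℝ≥0∞)⁻¹ := by
    have hne : ∀ m : ℕ, (m.factorial : ℝ≥0∞) ≠ 0 := fun m => by
      exact_mod_cast m.factorial_ne_zero
    have hnt : ∀ m : ℕ, (m.factorial : ℝ≥0∞) ≠ ∞ := fun m => ENNReal.natCast_ne_top _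
    rw [← ENNReal.mul_inv (Or.inl (hne _)) (Or.inl (hnt _)), ← Nat.choose_mul_factorial_mul_factorial hj']
    push_cast
    rw [ENNReal.mul_inv (Or.inr (hnt _)) (Or.inr (hne _)),
      ENNReal.mul_inv (Or.inr (hnt _)) (Or.inr (hne _)),
      ENNReal.mul_inv (Or.inr (hnt _)) (Or.inr (hne _))]
    have hc : (n.choose j : ℝ≥0∞)⁻¹ * (n.choose j : ℝ≥0∞) = 1 := by
      apply ENNReal.inv_mul_cancel
      · exact_mod_cast (Nat.choose_pos hj').ne'
      · exact ENNReal.natCast_ne_top _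
    calc _ = ((n.choose j : ℝ≥0∞)⁻¹ * (n.choose j : ℝ≥0∞)) * ((j.factorial : ℝ≥0∞)⁻¹ * ((n - j).factorial : ℝ≥0∞)⁻¹) := by ring
      _ = _ := by rw [hc, one_mul]
  have h2 : w ^ n = w ^ j * w ^ (n - j) := by rw [← pow_add]; congr 1; omega
  calc _ = w ^ n * ((n.factorial : ℝ≥0∞)⁻¹ * (n.choose j : ℝ≥0∞)) * (a j * b (n - j)) := by ring
    _ = _ := by rw [h1, h2]; ring

theorem auxN_pow (w : ℝ≥0∞) (g : ℕ → ℝ≥0∞) (l : ℕ) :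
    auxN w (auxPow g l) = auxN w g ^ l := by
  induction l with
  | zero =>
    unfold auxN auxPow
    rw [tsum_eq_single 0]
    · simp
    · intro n hn; simp [hn]
  | succ l ih => rw [auxPow, auxN_conv, ih, pow_succ']

theorem auxN_mono (w : ℝ≥0∞) {a b : ℕ → ℝ≥0∞} (h : ∀ n, a n ≤ b n) : auxN w a ≤ auxN w b :=
  ENNReal.tsum_le_tsum fun n => by gcongr; exact h n

theorem auxN_add (w : ℝ≥0∞) (a b : ℕ → ℝ≥0∞) :
    auxN w (fun n => a n + b n) = auxN w a + auxN w b := by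
  unfold auxN
  simp_rw [mul_add]
  exact ENNReal.tsum_add

theorem auxN_smul (w c : ℝ≥0∞) (a : ℕ → ℝ≥0∞) :
    auxN w (fun n => c * a n) = c * auxN w a := by
  unfold auxN
  rw [← ENNReal.tsum_mul_left]
  exact tsum_congr fun n => by ring

theorem auxN_tsum (w : ℝ≥0∞) (a : ℕ → ℕ → ℝ≥0∞) :
    auxN w (fun n => ∑' l, a l n) = ∑' l, auxN w (a l) := by
  unfold auxN
  rw [ENNReal.tsum_comm]
  exact tsum_congr fun n => ENNReal.tsum_mul_left.symm

theorem auxConv_powerset {k : ℕ} (S : Finset (Fin k)) (a b : ℕ → ℝ≥0∞) :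
    ∑ I ∈ S.powerset, a I.card * b (S \ I).card = auxConv a b S.card := by
  have : ∀ I ∈ S.powerset, a I.card * b (S \ I).card
      = (fun m => a m * b (S.card - m)) I.card := by
    intro I hI
    rw [Finset.card_sdiff_of_subset (Finset.mem_powerset.1 hI)]
  rw [Finset.sum_congr rfl this, Finset.sum_powerset_apply_card (fun m => a m * b (S.card - m))]
  simp [auxConv, nsmul_eq_mul]

theorem auxConv_mono {a a' b b' : ℕ → ℝ≥0∞} (ha : ∀ n, a n ≤ a' n) (hb : ∀ n, b n ≤ b' n)
    (n : ℕ) : auxConv a b n ≤ auxConv a' b' n := by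
  unfold auxConv
  gcongr
  · exact ha _
  · exact hb _

theorem aux_ordParts_le {k : ℕ} (g : ℕ → ℝ≥0∞) (l : ℕ) (S : Finset (Fin k)) :
    ∑ π ∈ CF.ordPartsOf l S, ∏ i : Fin l, g (π i).card ≤ auxPow g l S.card := by
  induction l generalizing S with
  | zero =>
    rw [auxPow]
    by_cases hS : S = ∅
    · subst hS
      simp only [Finset.univ_eq_empty, Finset.prod_empty, Finset.sum_const, nsmul_eq_mul, mul_one,
        Finset.card_empty, if_true]
      have : (CF.ordPartsOf 0 (∅ : Finset (Fin k))).card ≤ 1 := by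
        refine Finset.card_le_one.2 fun a _ b _ => Subsingleton.elim _ _
      exact_mod_cast this
    · have : CF.ordPartsOf 0 S = ∅ := by
        ext π
        simp only [CF.ordPartsOf, Finset.mem_filter, Finset.notMem_empty, iff_false]
        rintro ⟨-, -, -, h⟩
        apply hS
        ext a
        simp [h a]
      simp [this]
  | succ l ih =>
    rw [auxPow, ← auxConv_powerset]
    calc _ ≤ ∑ p ∈ S.powerset.sigma (fun I => CF.ordPartsOf l (S \ I)),
          g p.1.card * ∏ i : Fin l, g (p.2 i).card := by
          simp_rw [Fin.prod_univ_succ]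
          refine aux_sum_le_of_inj _ _
            (fun π : Fin (l + 1) → Finset (Fin k) => (⟨π 0, fun i => π i.succ⟩ :
              Σ _ : Finset (Fin k), (Fin l → Finset (Fin k)))) ?_ ?_
            (fun p => g p.1.card * ∏ i : Fin l, g (p.2 i).card)
          · intro π _ π' _ h
            simp only [Sigma.mk.injEq, heq_eq_eq] at h
            funext i
            refine Fin.cases h.1 (fun j => congrFun h.2 j) i
          · intro π hπ
            simp only [CF.ordPartsOf, Finset.mem_filter, Finset.mem_univ, true_and] at hπ
            obtain ⟨h1, h2, h3⟩ := hπ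
            simp only [CF.ordPartsOf, Finset.mem_sigma, Finset.mem_powerset, Finset.mem_filter,
              Finset.mem_univ, true_and, Finset.mem_sdiff]
            refine ⟨fun a ha => (h3 a).2 ⟨0, ha⟩, fun i => h1 _, fun i j hij =>
              h2 _ _ (fun h => hij (Fin.succ_injective _ h)), fun a => ⟨?_, ?_⟩⟩
            · rintro ⟨ha, ha0⟩
              obtain ⟨i, hi⟩ := (h3 a).1 ha
              obtain ⟨j, rfl⟩ := Fin.exists_succ_eq.2 (show i ≠ 0 by rintro rfl; exact ha0 hi)
              exact ⟨j, hi⟩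
            · rintro ⟨i, hi⟩
              exact ⟨(h3 a).2 ⟨_, hi⟩, fun h0 => Finset.disjoint_left.1
                (h2 0 i.succ (Fin.succ_ne_zero i).symm) h0 hi⟩
      _ = ∑ I ∈ S.powerset, g I.card * ∑ π ∈ CF.ordPartsOf l (S \ I), ∏ i : Fin l, g (π i).card := by
          rw [Finset.sum_sigma]
          simp_rw [Finset.mul_sum]
      _ ≤ _ := by
          gcongr
          exact ih _

noncomputable def auxAl (Δ B : ℝ≥0∞) (n : ℕ) : ℝ≥0∞ := (n.factorial : ℝ≥0∞) * Δ ^ n * B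

noncomputable def auxH (Δ : ℝ≥0∞) (n : ℕ) : ℝ≥0∞ :=
  if n = 0 then 0 else ((n + 1).factorial : ℝ≥0∞) * Δ ^ n

theorem auxConv_al (Δ B : ℝ≥0∞) (n : ℕ) (hn : n ≠ 0) :
    auxConv (auxAl Δ B) (auxAl Δ B) n = B ^ 2 * auxH Δ n := by
  unfold auxConv auxH
  rw [if_neg hn]
  have : ∀ j ∈ Finset.range (n + 1), (n.choose j : ℝ≥0∞) * (auxAl Δ B j * auxAl Δ B (n - j))
      = (n.factorial : ℝ≥0∞) * Δ ^ n * B ^ 2 := by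
    intro j hj
    have hj' : j ≤ n := Nat.lt_succ_iff.1 (Finset.mem_range.1 hj)
    have h2 : Δ ^ n = Δ ^ j * Δ ^ (n - j) := by rw [← pow_add]; congr 1; omega
    rw [← Nat.choose_mul_factorial_mul_factorial hj', h2]
    unfold auxAl
    push_cast
    ring
  rw [Finset.sum_congr rfl this, Finset.sum_const, Finset.card_range, nsmul_eq_mul,
    Nat.factorial_succ]
  push_cast
  ring

theorem aux_two_split {k : ℕ} (a : ℕ → ℝ≥0∞) :
    ∑ σ ∈ (Finset.univ : Finset (Finset (Fin k) × Finset (Fin k))).filter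
        (fun σ => Disjoint σ.1 σ.2 ∧ σ.1 ∪ σ.2 = Finset.univ), a σ.1.card * a σ.2.card
      ≤ auxConv a a k := by
  have h := auxConv_powerset (Finset.univ : Finset (Fin k)) a a
  rw [Finset.card_univ, Fintype.card_fin] at h
  rw [← h]
  have key : ∀ σ ∈ (Finset.univ : Finset (Finset (Fin k) × Finset (Fin k))).filter
        (fun σ => Disjoint σ.1 σ.2 ∧ σ.1 ∪ σ.2 = Finset.univ), σ.2 = Finset.univ \ σ.1 := by
    intro σ hσ
    obtain ⟨-, hd, hu⟩ := Finset.mem_filter.1 hσ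
    rw [← hu, Finset.union_sdiff_cancel_left hd]
  calc _ = ∑ σ ∈ (Finset.univ : Finset (Finset (Fin k) × Finset (Fin k))).filter
        (fun σ => Disjoint σ.1 σ.2 ∧ σ.1 ∪ σ.2 = Finset.univ),
          (fun I : Finset (Fin k) => a I.card * a (Finset.univ \ I).card) σ.1 := by
        refine Finset.sum_congr rfl fun σ hσ => ?_
        simp only [← key σ hσ]
    _ ≤ _ := by
        refine aux_sum_le_of_inj _ _ _ ?_ ?_ _
        · intro x hx y hy h
          refine Prod.ext h ?_
          rw [key x hx, key y hy, h]
        · intro x _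
          simp

theorem aux_three_split {k : ℕ} (a c q : ℕ → ℝ≥0∞) (hq : ∀ n, n ≠ 0 → auxConv a a n ≤ q n) :
    ∑ σ ∈ (Finset.univ : Finset (Finset (Fin k) × Finset (Fin k) × Finset (Fin k))).filter
                  (fun σ => Disjoint σ.1 σ.2.1 ∧ Disjoint σ.1 σ.2.2 ∧
                    Disjoint σ.2.1 σ.2.2 ∧ σ.1 ∪ σ.2.1 ∪ σ.2.2 = Finset.univ ∧
                    0 < σ.2.2.card ∧ σ.2.2.card < k), a σ.1.card * a σ.2.1.card * c σ.2.2.card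
      ≤ auxConv c q k := by
  set s := (Finset.univ : Finset (Finset (Fin k) × Finset (Fin k) × Finset (Fin k))).filter
                  (fun σ => Disjoint σ.1 σ.2.1 ∧ Disjoint σ.1 σ.2.2 ∧
                    Disjoint σ.2.1 σ.2.2 ∧ σ.1 ∪ σ.2.1 ∪ σ.2.2 = Finset.univ ∧
                    0 < σ.2.2.card ∧ σ.2.2.card < k) with hs
  have key : ∀ σ ∈ s, σ.2.1 = (Finset.univ \ σ.2.2) \ σ.1 := by
    intro σ hσ
    obtain ⟨-, h1, h2, h3, hu, -, -⟩ := Finset.mem_filter.1 hσ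
    ext x
    have hx : x ∈ σ.1 ∪ σ.2.1 ∪ σ.2.2 := by rw [hu]; exact Finset.mem_univ _
    simp only [Finset.mem_union] at hx
    have a1 : x ∈ σ.1 → x ∉ σ.2.1 := fun h => Finset.disjoint_left.1 h1 h
    have a2 : x ∈ σ.1 → x ∉ σ.2.2 := fun h => Finset.disjoint_left.1 h2 h
    have a3 : x ∈ σ.2.1 → x ∉ σ.2.2 := fun h => Finset.disjoint_left.1 h3 h
    simp only [Finset.mem_sdiff, Finset.mem_univ, true_and]
    tauto
  have h := auxConv_powerset (Finset.univ : Finset (Fin k)) c q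
  rw [Finset.card_univ, Fintype.card_fin] at h
  rw [← h]
  let F : (Σ _ : Finset (Fin k), Finset (Fin k)) → ℝ≥0∞ := fun p =>
    c p.1.card * (a p.2.card * a ((Finset.univ \ p.1) \ p.2).card)
  calc _ = ∑ σ ∈ s, F ⟨σ.2.2, σ.1⟩ := by
        refine Finset.sum_congr rfl fun σ hσ => ?_
        simp only [F, ← key σ hσ]
        ring
    _ ≤ ∑ p ∈ ((Finset.univ : Finset (Fin k)).powerset.filter (fun I => I.card < k)).sigma
          (fun I => (Finset.univ \ I).powerset), F p := by
        refine aux_sum_le_of_inj s _ (fun σ => (⟨σ.2.2, σ.1⟩ : Σ _ : Finset (Fin k), Finset (Fin k)))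
          ?_ ?_ F
        · intro x hx y hy h
          simp only [Sigma.mk.injEq, heq_eq_eq] at h
          refine Prod.ext h.2 (Prod.ext ?_ h.1)
          rw [key x hx, key y hy, h.1, h.2]
        · intro x hx
          obtain ⟨-, h1, h2, h3, hu, h4, h5⟩ := Finset.mem_filter.1 hx
          simp only [Finset.mem_sigma, Finset.mem_filter, Finset.mem_powerset,
            Finset.subset_univ, true_and]
          refine ⟨h5, fun y hy => ?_⟩
          simp only [Finset.mem_sdiff, Finset.mem_univ, true_and]
          exact Finset.disjoint_left.1 h2 hy
    _ = ∑ I ∈ (Finset.univ : Finset (Fin k)).powerset.filter (fun I => I.card < k),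
          c I.card * auxConv a a (Finset.univ \ I).card := by
        rw [Finset.sum_sigma]
        refine Finset.sum_congr rfl fun I _ => ?_
        rw [← auxConv_powerset, Finset.mul_sum]
    _ ≤ ∑ I ∈ (Finset.univ : Finset (Fin k)).powerset.filter (fun I => I.card < k),
          c I.card * q (Finset.univ \ I).card := by
        refine Finset.sum_le_sum fun I hI => ?_
        gcongr
        apply hq
        rw [Finset.card_sdiff_of_subset (Finset.subset_univ _), Finset.card_univ, Fintype.card_fin]
        have := (Finset.mem_filter.1 hI).2
        omega
    _ ≤ _ := Finset.sum_le_sum_of_subset (Finset.filter_subset _ _)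

noncomputable def auxTr (g : ℕ → ℝ≥0∞) (n j : ℕ) : ℝ≥0∞ := if 1 ≤ j ∧ j < n then g j else 0

theorem aux_geom (S : ℝ≥0∞) (hS : S ≤ 4⁻¹) (m : ℕ) : ∑' l : ℕ, S ^ (l + m) ≤ 4⁻¹ ^ m * 2 := by
  have h42 : (4⁻¹ : ℝ≥0∞) ≤ 2⁻¹ := ENNReal.inv_le_inv.2 (by norm_num)
  calc _ ≤ ∑' l : ℕ, (4⁻¹ : ℝ≥0∞) ^ m * (2⁻¹ : ℝ≥0∞) ^ l := by
        refine ENNReal.tsum_le_tsum fun l => ?_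
        rw [pow_add, mul_comm]
        gcongr
        exact hS.trans h42
    _ = _ := by rw [ENNReal.tsum_mul_left, ENNReal.tsum_geometric_two]

theorem aux_recursion (w K b : ℝ≥0∞) (h g : ℕ → ℝ≥0∞)
    (hrec : ∀ n k, 1 ≤ k → k ≤ n → g k ≤ K * h k
      + auxConv (fun m => ∑' l, auxPow (auxTr g n) (l + 1) m) (fun m => b * h m) k
      + ∑' l, auxPow (auxTr g n) (l + 2) k)
    (hK : K * auxN w h ≤ 4⁻¹ ^ 2) (hb : b * auxN w h ≤ 4⁻¹ ^ 2) (n : ℕ) :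
    auxN w (auxTr g n) ≤ 4⁻¹ := by
  induction n with
  | zero => simp [auxN, auxTr]
  | succ n ih =>
    have q4 : (4 : ℝ≥0∞) * 4⁻¹ = 1 := ENNReal.mul_inv_cancel (by norm_num) (by norm_num)
    have q2 : (4⁻¹ : ℝ≥0∞) * 2 ≤ 1 := by
      calc (4⁻¹ : ℝ≥0∞) * 2 ≤ 4⁻¹ * 4 := by gcongr; norm_num
        _ = 1 := by rw [mul_comm, q4]
    calc auxN w (auxTr g (n + 1)) ≤ auxN w (fun k => K * h k
          + auxConv (fun m => ∑' l, auxPow (auxTr g n) (l + 1) m) (fun m => b * h m) k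
          + ∑' l, auxPow (auxTr g n) (l + 2) k) := by
          refine auxN_mono w fun k => ?_
          rw [auxTr]
          split_ifs with hk
          · exact hrec n k hk.1 (by omega)
          · exact zero_le
      _ = K * auxN w h + (∑' l : ℕ, auxN w (auxTr g n) ^ (l + 1)) * (b * auxN w h)
          + ∑' l : ℕ, auxN w (auxTr g n) ^ (l + 2) := by
          rw [auxN_add, auxN_add, auxN_smul, auxN_conv, auxN_tsum, auxN_tsum, auxN_smul]
          simp_rw [auxN_pow]
      _ ≤ 4⁻¹ ^ 2 + (4⁻¹ ^ 1 * 2) * 4⁻¹ ^ 2 + 4⁻¹ ^ 2 * 2 := by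
          gcongr
          · exact aux_geom _ ih 1
          · exact aux_geom _ ih 2
      _ ≤ 4⁻¹ ^ 2 + 1 * 4⁻¹ ^ 2 + 4⁻¹ ^ 2 * 2 := by
          gcongr
          rwa [pow_one]
      _ = (4 * 4⁻¹) * 4⁻¹ := by ring
      _ = 4⁻¹ := by rw [q4, one_mul]

theorem auxN_H (w Δ : ℝ≥0∞) (hr : 2 * (w * Δ) ≤ 2⁻¹) :
    auxN w (auxH Δ) ≤ 4 * (w * Δ) := by
  unfold auxN
  rw [tsum_eq_zero_add' ENNReal.summable]
  simp only [auxH, if_true, mul_zero, zero_add]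
  calc _ ≤ ∑' n : ℕ, (2 * (w * Δ)) * (2⁻¹ : ℝ≥0∞) ^ n := by
        refine ENNReal.tsum_le_tsum fun n => ?_
        rw [if_neg (Nat.succ_ne_zero n)]
        have hf : ((n + 1).factorial : ℝ≥0∞)⁻¹ * ((n + 1).factorial : ℝ≥0∞) = 1 := by
          apply ENNReal.inv_mul_cancel
          · exact_mod_cast (Nat.factorial_ne_zero _)
          · exact ENNReal.natCast_ne_top _
        have h2 : (((n + 1 + 1 : ℕ)) : ℝ≥0∞) ≤ 2 ^ (n + 1) := by
          exact_mod_cast (Nat.lt_two_pow_self (n := n + 1))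
        calc _ = (((n + 1).factorial : ℝ≥0∞)⁻¹ * ((n + 1).factorial : ℝ≥0∞))
              * ((n + 1 + 1 : ℕ) : ℝ≥0∞) * (w * Δ) ^ (n + 1) := by
              rw [Nat.factorial_succ (n + 1)]
              push_cast
              ring
          _ ≤ 1 * 2 ^ (n + 1) * (w * Δ) ^ (n + 1) := by rw [hf]; gcongr
          _ = (2 * (w * Δ)) * (2 * (w * Δ)) ^ n := by ring
          _ ≤ _ := by gcongr
    _ = _ := by rw [ENNReal.tsum_mul_left, ENNReal.tsum_geometric_two]; ring

theorem aux_block {X : Type} [MeasurableSpace X] (μ : Measure X) [SigmaFinite μ]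
    {k l : ℕ} (π : Fin l → Finset (Fin k))
    (hdis : ∀ i j, i ≠ j → Disjoint (π i) (π j)) (hcov : ∀ a, ∃ i, a ∈ π i)
    (φ : Fin l → (n : ℕ) → (Fin n → X) → ℝ) (hF : ∀ i, Measurable (φ i (π i).card)) :
    ∫⁻ y, ∏ i, ‖φ i (π i).card (CF.sub y (π i))‖ₑ ∂(Measure.pi fun _ : Fin k => μ) =
      ∏ i, ∫⁻ z, ‖φ i (π i).card z‖ₑ ∂(Measure.pi fun _ : Fin (π i).card => μ) :=
  aux_block_integral μ π hdis hcov (fun i z => ‖φ i (π i).card z‖ₑ) (fun i => (hF i).enorm)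

theorem aux_meas_sub {X : Type} [MeasurableSpace X] {k : ℕ} (I : Finset (Fin k)) :
    Measurable fun y : Fin k → X => CF.sub y I :=
  measurable_pi_lambda _ fun _ => measurable_pi_apply _

theorem aux_block2 {X : Type} [MeasurableSpace X] (μ : Measure X) [SigmaFinite μ]
    {k : ℕ} (s1 s2 : Finset (Fin k)) (hd : Disjoint s1 s2) (hu : s1 ∪ s2 = Finset.univ)
    (f1 f2 : CF X) (h1 : ∀ n, Measurable (f1 n)) (h2 : ∀ n, Measurable (f2 n)) :
    ∫⁻ y, ‖f1 s1.card (CF.sub y s1)‖ₑ * ‖f2 s2.card (CF.sub y s2)‖ₑ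
        ∂(Measure.pi fun _ : Fin k => μ) =
      (∫⁻ z, ‖f1 s1.card z‖ₑ ∂(Measure.pi fun _ => μ)) *
        ∫⁻ z, ‖f2 s2.card z‖ₑ ∂(Measure.pi fun _ => μ) := by
  have := aux_block μ (k := k) (l := 2) ![s1, s2] ?_ ?_ ![f1, f2] ?_
  · simp only [Fin.prod_univ_two] at this
    exact this
  · intro i j hij
    fin_cases i <;> fin_cases j <;> simp_all [hd.symm]
  · intro a
    have ha : a ∈ s1 ∪ s2 := by rw [hu]; exact Finset.mem_univ _
    rcases Finset.mem_union.1 ha with h | h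
    · exact ⟨0, h⟩
    · exact ⟨1, h⟩
  · intro i
    fin_cases i
    · exact h1 _
    · exact h2 _

theorem aux_block3 {X : Type} [MeasurableSpace X] (μ : Measure X) [SigmaFinite μ]
    {k l : ℕ} (s1 s2 s3 : Finset (Fin k)) (h12 : Disjoint s1 s2) (h13 : Disjoint s1 s3)
    (h23 : Disjoint s2 s3) (hu : s1 ∪ s2 ∪ s3 = Finset.univ)
    (π : Fin l → Finset (Fin k)) (hπ : π ∈ CF.ordPartsOf l s3)
    (f1 f2 ω : CF X) (h1 : ∀ n, Measurable (f1 n)) (h2 : ∀ n, Measurable (f2 n))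
    (hω : ∀ i, Measurable (ω (π i).card)) :
    ∫⁻ y, ‖f1 s1.card (CF.sub y s1)‖ₑ * (‖f2 s2.card (CF.sub y s2)‖ₑ *
        ∏ i, ‖ω (π i).card (CF.sub y (π i))‖ₑ) ∂(Measure.pi fun _ : Fin k => μ) =
      (∫⁻ z, ‖f1 s1.card z‖ₑ ∂(Measure.pi fun _ => μ)) *
        ((∫⁻ z, ‖f2 s2.card z‖ₑ ∂(Measure.pi fun _ => μ)) *
        ∏ i, ∫⁻ z, ‖ω (π i).card z‖ₑ ∂(Measure.pi fun _ => μ)) := by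
  simp only [CF.ordPartsOf, Finset.mem_filter, Finset.mem_univ, true_and] at hπ
  obtain ⟨-, hdis, hcov⟩ := hπ
  have hsub : ∀ i, π i ⊆ s3 := fun i a ha => (hcov a).2 ⟨i, ha⟩
  have := aux_block μ (k := k) (l := l + 2)
    (Fin.cons s1 (Fin.cons s2 π : Fin (l + 1) → Finset (Fin k)) : Fin (l + 2) → Finset (Fin k)) ?_ ?_
    (Fin.cons f1 (Fin.cons f2 (fun _ => ω) : Fin (l + 1) → CF X) : Fin (l + 2) → CF X) ?_
  · simp only [Fin.prod_univ_succ] at this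
    exact this
  · have a1 : ∀ i, Disjoint s1 (π i) := fun i => h13.mono_right (hsub i)
    have a2 : ∀ i, Disjoint s2 (π i) := fun i => h23.mono_right (hsub i)
    intro i j hij
    induction i using Fin.cases with
    | zero =>
      induction j using Fin.cases with
      | zero => exact absurd rfl hij
      | succ j =>
        induction j using Fin.cases with
        | zero => exact h12
        | succ j => exact a1 j
    | succ i =>
      induction i using Fin.cases with
      | zero =>
        induction j using Fin.cases with
        | zero => exact h12.symm
        | succ j =>
          induction j using Fin.cases with
          | zero => exact absurd rfl hij
          | succ j => exact a2 j
      | succ i =>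
        induction j using Fin.cases with
        | zero => exact (a1 i).symm
        | succ j =>
          induction j using Fin.cases with
          | zero => exact (a2 i).symm
          | succ j => exact hdis i j (fun h => hij (by rw [h]))
  · intro a
    have ha : a ∈ s1 ∪ s2 ∪ s3 := by rw [hu]; exact Finset.mem_univ _
    rcases Finset.mem_union.1 ha with h | h
    · rcases Finset.mem_union.1 h with h | h
      · exact ⟨0, h⟩
      · exact ⟨1, h⟩
    · obtain ⟨i, hi⟩ := (hcov a).1 h
      exact ⟨i.succ.succ, hi⟩
  · intro i
    induction i using Fin.cases with
    | zero => exact h1 _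
    | succ i =>
      induction i using Fin.cases with
      | zero => exact h2 _
      | succ i => exact hω i

theorem aux_part_card {k l : ℕ} {S : Finset (Fin k)} {π : Fin l → Finset (Fin k)}
    (hπ : π ∈ CF.ordPartsOf l S) (i : Fin l) :
    1 ≤ (π i).card ∧ (π i).card ≤ S.card := by
  simp only [CF.ordPartsOf, Finset.mem_filter, Finset.mem_univ, true_and] at hπ
  obtain ⟨h1, -, h3⟩ := hπ
  exact ⟨Finset.card_pos.2 (h1 i), Finset.card_le_card fun a ha => (h3 a).2 ⟨i, ha⟩⟩

theorem aux_part_card_lt {k l : ℕ} (hl : 2 ≤ l) {S : Finset (Fin k)}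
    {π : Fin l → Finset (Fin k)}
    (hπ : π ∈ CF.ordPartsOf l S) (i : Fin l) :
    (π i).card < S.card := by
  simp only [CF.ordPartsOf, Finset.mem_filter, Finset.mem_univ, true_and] at hπ
  obtain ⟨h1, h2, h3⟩ := hπ
  have : Nontrivial (Fin l) := Fin.nontrivial_iff_two_le.2 hl
  obtain ⟨j, hj⟩ := exists_ne i
  refine Finset.card_lt_card ⟨fun a ha => (h3 a).2 ⟨i, ha⟩, fun hs => ?_⟩
  obtain ⟨b, hb⟩ := h1 j
  exact Finset.disjoint_left.1 (h2 j i hj) hb (hs ((h3 b).2 ⟨j, hb⟩))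

/-- the recursion -/
def AuxRec {X : Type} (f1 f2 t ω : CF X) (c : ℝ) : Prop :=
  ∀ k : ℕ, 2 ≤ k → ∀ y : Fin k → X, ω k y = t k y
    - c * ∑ σ ∈ (Finset.univ : Finset (Finset (Fin k) × Finset (Fin k))).filter
            (fun σ => Disjoint σ.1 σ.2 ∧ σ.1 ∪ σ.2 = Finset.univ),
          f1 σ.1.card (CF.sub y σ.1) * f2 σ.2.card (CF.sub y σ.2)
    - ∑ σ ∈ (Finset.univ :
          Finset (Finset (Fin k) × Finset (Fin k) × Finset (Fin k))).filter
          (fun σ => Disjoint σ.1 σ.2.1 ∧ Disjoint σ.1 σ.2.2 ∧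
            Disjoint σ.2.1 σ.2.2 ∧ σ.1 ∪ σ.2.1 ∪ σ.2.2 = Finset.univ ∧
            0 < σ.2.2.card ∧ σ.2.2.card < k),
        f1 σ.1.card (CF.sub y σ.1) * f2 σ.2.1.card (CF.sub y σ.2.1) *
          ∑ l ∈ Finset.Icc 1 σ.2.2.card, ((l.factorial : ℝ))⁻¹ *
            ∑ π ∈ CF.ordPartsOf l σ.2.2,
              ∏ i : Fin l, ω (π i).card (CF.sub y (π i))
    - ∑ l ∈ Finset.Icc 2 k, ((l.factorial : ℝ))⁻¹ *
        ∑ π ∈ CF.ordPartsOf l (Finset.univ : Finset (Fin k)),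
          ∏ i : Fin l, ω (π i).card (CF.sub y (π i))

theorem aux_meas {X : Type} [MeasurableSpace X] (f1 f2 t ω : CF X) (c : ℝ)
    (h1 : ∀ n, Measurable (f1 n)) (h2 : ∀ n, Measurable (f2 n)) (ht : ∀ n, Measurable (t n))
    (hb : ∀ y, ω 1 y = t 1 y) (hr : AuxRec f1 f2 t ω c) (k : ℕ) (hk : 1 ≤ k) :
    Measurable (ω k) := by
  induction k using Nat.strong_induction_on with
  | _ k ih =>
    rcases Nat.lt_or_ge k 2 with hk2 | hk2
    · obtain rfl : k = 1 := by omega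
      rw [show ω 1 = t 1 from funext hb]
      exact ht 1
    · rw [show ω k = _ from funext (hr k hk2)]
      refine ((Measurable.sub (Measurable.sub (ht k) ?_) ?_).sub ?_)
      · refine Measurable.const_mul (Finset.measurable_fun_sum _ fun σ _ => ?_) _
        exact ((h1 _).comp (aux_meas_sub _)).mul ((h2 _).comp (aux_meas_sub _))
      · refine Finset.measurable_fun_sum _ fun σ hσ => ?_
        obtain ⟨-, -, -, -, -, -, h5⟩ := Finset.mem_filter.1 hσ
        refine Measurable.mul (((h1 _).comp (aux_meas_sub _)).mul ((h2 _).comp (aux_meas_sub _))) ?_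
        refine Finset.measurable_fun_sum _ fun l _ => Measurable.const_mul ?_ _
        refine Finset.measurable_fun_sum _ fun π hπ => Finset.measurable_fun_prod _ fun i _ => ?_
        have := aux_part_card hπ i
        exact (ih _ (by omega) this.1).comp (aux_meas_sub _)
      · refine Finset.measurable_fun_sum _ fun l hl => Measurable.const_mul ?_ _
        refine Finset.measurable_fun_sum _ fun π hπ => Finset.measurable_fun_prod _ fun i _ => ?_
        have h := aux_part_card_lt (Finset.mem_Icc.1 hl).1 hπ i
        rw [Finset.card_univ, Fintype.card_fin] at h
        exact (ih _ h (aux_part_card hπ i).1).comp (aux_meas_sub _)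

theorem aux_enorm_prod {ι : Type*} (s : Finset ι) (f : ι → ℝ) :
    ‖∏ i ∈ s, f i‖ₑ = ∏ i ∈ s, ‖f i‖ₑ := by
  classical
  induction s using Finset.induction_on with
  | empty => simp
  | insert a s ha ih => rw [Finset.prod_insert ha, Finset.prod_insert ha, enorm_mul, ih]

theorem aux_enorm_parts_prod {ι : Type*} (L : Finset ℕ) (P : (l : ℕ) → Finset (Fin l → ι))
    (u : ι → ℝ) :
    ‖∑ l ∈ L, ((l.factorial : ℝ))⁻¹ * ∑ π ∈ P l, ∏ i : Fin l, u (π i)‖ₑ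
      ≤ ∑ l ∈ L, ∑ π ∈ P l, ∏ i : Fin l, ‖u (π i)‖ₑ := by
  refine (enorm_sum_le _ _).trans (Finset.sum_le_sum fun l _ => ?_)
  rw [enorm_mul]
  have : ‖((l.factorial : ℝ))⁻¹‖ₑ ≤ 1 := by
    rw [Real.enorm_eq_ofReal (by positivity), ENNReal.ofReal_le_one]
    exact inv_le_one_of_one_le₀ (by exact_mod_cast l.factorial_pos)
  calc _ ≤ 1 * ‖∑ π ∈ P l, ∏ i : Fin l, u (π i)‖ₑ := by gcongr
    _ ≤ _ := by
      rw [one_mul]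
      refine (enorm_sum_le _ _).trans (le_of_eq ?_)
      exact Finset.sum_congr rfl fun π _ => aux_enorm_prod _ _

theorem aux_enorm_parts_mul {ι : Type*} (a b : ℝ) (L : Finset ℕ)
    (P : (l : ℕ) → Finset (Fin l → ι)) (u : ι → ℝ) :
    ‖a * b * ∑ l ∈ L, ((l.factorial : ℝ))⁻¹ * ∑ π ∈ P l, ∏ i : Fin l, u (π i)‖ₑ
      ≤ ∑ l ∈ L, ∑ π ∈ P l, ‖a‖ₑ * (‖b‖ₑ * ∏ i : Fin l, ‖u (π i)‖ₑ) := by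
  rw [enorm_mul, enorm_mul]
  refine (mul_le_mul' le_rfl (aux_enorm_parts_prod L P u)).trans (le_of_eq ?_)
  simp_rw [Finset.mul_sum, mul_assoc]

theorem aux_sum_tsum (p : ℕ → ℝ≥0∞) (m k : ℕ) :
    ∑ l ∈ Finset.Icc m k, p l ≤ ∑' l, p (l + m) := by
  calc _ = ∑ l ∈ Finset.Icc m k, (fun j => p (j + m)) (l - m) := by
        refine Finset.sum_congr rfl fun l hl => ?_
        have := (Finset.mem_Icc.1 hl).1
        simp only
        congr 1
        omega
    _ ≤ ∑ j ∈ Finset.range (k + 1), p (j + m) := by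
        refine aux_sum_le_of_inj _ _ (fun l => l - m) ?_ ?_ (fun j => p (j + m))
        · intro x hx y hy h
          have := (Finset.mem_Icc.1 hx).1
          have := (Finset.mem_Icc.1 hy).1
          change x - m = y - m at h
          omega
        · intro x hx
          have := (Finset.mem_Icc.1 hx).2
          simp only [Finset.mem_range]
          omega
    _ ≤ _ := ENNReal.sum_le_tsum _

theorem aux_step {X : Type} [MeasurableSpace X] (μ : Measure X) [SigmaFinite μ]
    (f1 f2 t ω : CF X) (c : ℝ)
    (h1 : ∀ n, Measurable (f1 n)) (h2 : ∀ n, Measurable (f2 n)) (ht : ∀ n, Measurable (t n))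
    (hb : ∀ y, ω 1 y = t 1 y) (hr : AuxRec f1 f2 t ω c)
    (Δ B T c' : ℝ≥0∞)
    (hf1 : ∀ n, ∫⁻ z, ‖f1 n z‖ₑ ∂(Measure.pi fun _ => μ) ≤ auxAl Δ B n)
    (hf2 : ∀ n, ∫⁻ z, ‖f2 n z‖ₑ ∂(Measure.pi fun _ => μ) ≤ auxAl Δ B n)
    (htb : ∀ n, 1 ≤ n → ∫⁻ z, ‖t n z‖ₑ ∂(Measure.pi fun _ => μ) ≤ T * auxH Δ n)
    (hc : ‖c‖ₑ ≤ c') (g : ℕ → ℝ≥0∞)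
    (hg : ∀ n, g n = ∫⁻ z, ‖ω n z‖ₑ ∂(Measure.pi fun _ => μ))
    (n k : ℕ) (hk : 1 ≤ k) (hkn : k ≤ n) :
    g k ≤ (T + c' * B ^ 2) * auxH Δ k
      + auxConv (fun m => ∑' l, auxPow (auxTr g n) (l + 1) m) (fun m => B ^ 2 * auxH Δ m) k
      + ∑' l, auxPow (auxTr g n) (l + 2) k := by
  have hω := aux_meas f1 f2 t ω c h1 h2 ht hb hr
  rcases Nat.lt_or_ge k 2 with hk2 | hk2
  · obtain rfl : k = 1 := by omega
    rw [hg, show ω 1 = t 1 from funext hb]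
    refine (htb 1 le_rfl).trans ?_
    rw [add_mul, add_assoc, add_assoc]
    exact le_self_add
  set ν := Measure.pi fun _ : Fin k => μ with hν
  set s2 := (Finset.univ : Finset (Finset (Fin k) × Finset (Fin k))).filter
            (fun σ => Disjoint σ.1 σ.2 ∧ σ.1 ∪ σ.2 = Finset.univ) with hs2
  set s3 := (Finset.univ :
          Finset (Finset (Fin k) × Finset (Fin k) × Finset (Fin k))).filter
          (fun σ => Disjoint σ.1 σ.2.1 ∧ Disjoint σ.1 σ.2.2 ∧
            Disjoint σ.2.1 σ.2.2 ∧ σ.1 ∪ σ.2.1 ∪ σ.2.2 = Finset.univ ∧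
            0 < σ.2.2.card ∧ σ.2.2.card < k) with hs3
  let U2 : (Fin k → X) → ℝ≥0∞ := fun y => ∑ σ ∈ s2,
    ‖f1 σ.1.card (CF.sub y σ.1)‖ₑ * ‖f2 σ.2.card (CF.sub y σ.2)‖ₑ
  let U3 : (Fin k → X) → ℝ≥0∞ := fun y => ∑ σ ∈ s3, ∑ l ∈ Finset.Icc 1 σ.2.2.card,
    ∑ π ∈ CF.ordPartsOf l σ.2.2,
    ‖f1 σ.1.card (CF.sub y σ.1)‖ₑ * (‖f2 σ.2.1.card (CF.sub y σ.2.1)‖ₑ *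
      ∏ i : Fin l, ‖ω (π i).card (CF.sub y (π i))‖ₑ)
  let U4 : (Fin k → X) → ℝ≥0∞ := fun y => ∑ l ∈ Finset.Icc 2 k,
        ∑ π ∈ CF.ordPartsOf l (Finset.univ : Finset (Fin k)),
          ∏ i : Fin l, ‖ω (π i).card (CF.sub y (π i))‖ₑ
  have hpt : ∀ y, ‖ω k y‖ₑ ≤ ‖t k y‖ₑ + c' * U2 y + U3 y + U4 y := by
    intro y
    rw [hr k hk2 y]
    refine (enorm_sub_le).trans (add_le_add ((enorm_sub_le).trans (add_le_add
      ((enorm_sub_le).trans (add_le_add le_rfl ?_)) ?_)) ?_)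
    · rw [enorm_mul]
      refine mul_le_mul' hc ((enorm_sum_le _ _).trans (le_of_eq ?_))
      exact Finset.sum_congr rfl fun σ _ => enorm_mul _ _
    · refine (enorm_sum_le _ _).trans (Finset.sum_le_sum fun σ _ => ?_)
      exact aux_enorm_parts_mul _ _ _ (fun l => CF.ordPartsOf l σ.2.2)
        (fun I => ω I.card (CF.sub y I))
    · exact aux_enorm_parts_prod _ (fun l => CF.ordPartsOf l (Finset.univ : Finset (Fin k)))
        (fun I => ω I.card (CF.sub y I))
  -- measurability
  have mf1 : ∀ I : Finset (Fin k), Measurable fun y : Fin k → X => ‖f1 I.card (CF.sub y I)‖ₑ :=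
    fun I => ((h1 _).comp (aux_meas_sub _)).enorm
  have mf2 : ∀ I : Finset (Fin k), Measurable fun y : Fin k → X => ‖f2 I.card (CF.sub y I)‖ₑ :=
    fun I => ((h2 _).comp (aux_meas_sub _)).enorm
  have mω : ∀ (S : Finset (Fin k)) (l : ℕ), ∀ π ∈ CF.ordPartsOf l S,
      Measurable fun y : Fin k → X => ∏ i : Fin l, ‖ω (π i).card (CF.sub y (π i))‖ₑ := by
    intro S l π hπ
    exact Finset.measurable_fun_prod _ fun i _ =>
      ((hω _ (aux_part_card hπ i).1).comp (aux_meas_sub _)).enorm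
  have mm2 : ∀ σ : Finset (Fin k) × Finset (Fin k), Measurable fun y : Fin k → X =>
      ‖f1 σ.1.card (CF.sub y σ.1)‖ₑ * ‖f2 σ.2.card (CF.sub y σ.2)‖ₑ :=
    fun σ => (mf1 _).mul (mf2 _)
  have mm3 : ∀ (σ : Finset (Fin k) × Finset (Fin k) × Finset (Fin k)) (l : ℕ),
      ∀ π ∈ CF.ordPartsOf l σ.2.2, Measurable fun y : Fin k → X =>
      ‖f1 σ.1.card (CF.sub y σ.1)‖ₑ * (‖f2 σ.2.1.card (CF.sub y σ.2.1)‖ₑ *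
      ∏ i : Fin l, ‖ω (π i).card (CF.sub y (π i))‖ₑ) :=
    fun σ l π hπ => (mf1 _).mul ((mf2 _).mul (mω _ _ π hπ))
  have m2 : Measurable U2 := Finset.measurable_fun_sum _ fun σ _ => mm2 σ
  have m3 : Measurable U3 := Finset.measurable_fun_sum _ fun σ _ =>
    Finset.measurable_fun_sum _ fun l _ => Finset.measurable_fun_sum _ fun π hπ => mm3 σ _ π hπ
  have m4 : Measurable U4 := Finset.measurable_fun_sum _ fun l _ =>
    Finset.measurable_fun_sum _ fun π hπ => mω _ _ π hπ
  -- integrals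
  have i2 : ∫⁻ y, U2 y ∂ν ≤ B ^ 2 * auxH Δ k := by
    rw [lintegral_finsetSum _ fun σ _ => mm2 σ]
    rw [← auxConv_al Δ B k (by omega)]
    refine le_trans (Finset.sum_le_sum fun σ hσ => ?_) (aux_two_split (auxAl Δ B))
    obtain ⟨-, hd, hu⟩ := Finset.mem_filter.1 hσ
    rw [hν, aux_block2 μ σ.1 σ.2 hd hu f1 f2 h1 h2]
    exact mul_le_mul' (hf1 _) (hf2 _)
  have i3 : ∫⁻ y, U3 y ∂ν ≤ auxConv (fun m => ∑' l, auxPow (auxTr g n) (l + 1) m)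
      (fun m => B ^ 2 * auxH Δ m) k := by
    rw [lintegral_finsetSum _ fun σ _ => Finset.measurable_fun_sum _ fun l _ =>
      Finset.measurable_fun_sum _ fun π hπ => mm3 σ _ π hπ]
    refine le_trans (Finset.sum_le_sum fun σ hσ => ?_) (aux_three_split (auxAl Δ B) _ _
      (fun m hm => (auxConv_al Δ B m hm).le))
    obtain ⟨-, h12, h13, h23, hu, h4, h5⟩ := Finset.mem_filter.1 hσ
    rw [lintegral_finsetSum _ fun l _ =>
      Finset.measurable_fun_sum _ fun π hπ => mm3 σ _ π hπ]
    calc _ ≤ ∑ l ∈ Finset.Icc 1 σ.2.2.card, auxAl Δ B σ.1.card * auxAl Δ B σ.2.1.card *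
            auxPow (auxTr g n) l σ.2.2.card := by
          refine Finset.sum_le_sum fun l _ => ?_
          rw [lintegral_finsetSum _ fun π hπ => mm3 σ _ π hπ]
          refine le_trans (Finset.sum_le_sum fun π hπ => ?_)
            ((Finset.mul_sum _ _ _).symm.le.trans
              (mul_le_mul' le_rfl (aux_ordParts_le (auxTr g n) l σ.2.2)))
          rw [hν, aux_block3 μ σ.1 σ.2.1 σ.2.2 h12 h13 h23 hu π hπ f1 f2 ω h1 h2
            (fun i => hω _ (aux_part_card hπ i).1), mul_assoc]
          refine mul_le_mul' (hf1 _) (mul_le_mul' (hf2 _) (le_of_eq ?_))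
          refine Finset.prod_congr rfl fun i _ => ?_
          have := aux_part_card hπ i
          rw [auxTr, if_pos ⟨this.1, by omega⟩, hg]
      _ ≤ _ := by
          rw [← Finset.mul_sum]
          exact mul_le_mul' le_rfl (aux_sum_tsum (fun l => auxPow (auxTr g n) l σ.2.2.card) 1 _)
  have i4 : ∫⁻ y, U4 y ∂ν ≤ ∑' l, auxPow (auxTr g n) (l + 2) k := by
    refine le_trans ?_ (aux_sum_tsum (fun l => auxPow (auxTr g n) l k) 2 k)
    rw [lintegral_finsetSum _ fun l _ =>
      Finset.measurable_fun_sum _ fun π hπ => mω _ _ π hπ]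
    refine Finset.sum_le_sum fun l hl => ?_
    rw [lintegral_finsetSum _ fun π hπ => mω _ _ π hπ]
    have := aux_ordParts_le (auxTr g n) l (Finset.univ : Finset (Fin k))
    rw [Finset.card_univ, Fintype.card_fin] at this
    refine le_trans (Finset.sum_le_sum fun π hπ => ?_) this
    have hπ' := hπ
    simp only [CF.ordPartsOf, Finset.mem_filter, Finset.mem_univ, true_and] at hπ'
    rw [hν, aux_block μ π hπ'.2.1 (fun a => (hπ'.2.2 a).1 trivial) (fun _ => ω)
      (fun i => hω _ (aux_part_card hπ i).1)]
    refine le_of_eq (Finset.prod_congr rfl fun i _ => ?_)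
    have h1 := (aux_part_card hπ i).1
    have h2 := aux_part_card_lt (Finset.mem_Icc.1 hl).1 hπ i
    rw [Finset.card_univ, Fintype.card_fin] at h2
    rw [auxTr, if_pos ⟨h1, by omega⟩, hg]
  calc g k = ∫⁻ y, ‖ω k y‖ₑ ∂ν := hg k
    _ ≤ ∫⁻ y, (‖t k y‖ₑ + c' * U2 y + U3 y + U4 y) ∂ν := lintegral_mono hpt
    _ = ∫⁻ y, ‖t k y‖ₑ ∂ν + c' * ∫⁻ y, U2 y ∂ν + ∫⁻ y, U3 y ∂ν + ∫⁻ y, U4 y ∂ν := by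
        rw [lintegral_add_right _ m4, lintegral_add_right _ m3,
          lintegral_add_right _ (m2.const_mul _), lintegral_const_mul _ m2]
    _ ≤ _ := by
        rw [add_mul, mul_assoc c']
        exact add_le_add (add_le_add (add_le_add (htb k hk) (mul_le_mul' le_rfl i2)) i3) i4

theorem aux_div_int {Y : Type*} [MeasurableSpace Y] (ν : Measure Y) (u : Y → ℝ) (b p : ℝ)
    (hp : 0 < p) (h : ∫⁻ y, ENNReal.ofReal |u y| ∂ν ≤ ENNReal.ofReal b) :
    ∫⁻ y, ‖u y / p‖ₑ ∂ν ≤ ENNReal.ofReal (b / p) := by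
  have h1 : ∀ y, ‖u y / p‖ₑ = ENNReal.ofReal |u y| * ENNReal.ofReal p⁻¹ := by
    intro y
    rw [div_eq_mul_inv, enorm_mul, Real.enorm_eq_ofReal_abs, Real.enorm_eq_ofReal (by positivity)]
  simp_rw [h1]
  rw [lintegral_mul_const' _ _ ENNReal.ofReal_ne_top, div_eq_mul_inv,
    ENNReal.ofReal_mul' (by positivity)]
  gcongr

theorem auxAl_ofReal (D B : ℝ) (hD : 0 < D) (hB : 0 < B) (n : ℕ) :
    auxAl (ENNReal.ofReal D) (ENNReal.ofReal B) n = ENNReal.ofReal (n.factorial * D ^ n * B) := by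
  unfold auxAl
  rw [ENNReal.ofReal_mul (by positivity), ENNReal.ofReal_mul (by positivity),
    ENNReal.ofReal_pow hD.le, ENNReal.ofReal_natCast]

theorem auxH_ofReal (D : ℝ) (hD : 0 < D) (n : ℕ) (hn : 1 ≤ n) :
    auxH (ENNReal.ofReal D) n = ENNReal.ofReal ((n + 1).factorial * D ^ n) := by
  unfold auxH
  rw [if_neg (by omega), ENNReal.ofReal_mul (by positivity),
    ENNReal.ofReal_pow hD.le, ENNReal.ofReal_natCast]

theorem aux_one_point {X : Type} [MeasurableSpace X] (μ : Measure X) [SigmaFinite μ]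
    (F : CF X) (x : X) (p M A D : ℝ) (hM : 0 < M) (hA : 0 < A) (hD : 0 < D) (hp : 0 < p)
    (h0 : F 1 ![x] = p)
    (hb : ∀ k : ℕ, 1 ≤ k → ∫⁻ y, ENNReal.ofReal |F (k + 1) (Fin.cons x y)|
      ∂(Measure.pi fun _ => μ) ≤ ENNReal.ofReal (k.factorial * M * A * D ^ k * p)) (n : ℕ) :
    ∫⁻ y, ‖F (n + 1) (Fin.cons x y) / p‖ₑ ∂(Measure.pi fun _ => μ) ≤
      auxAl (ENNReal.ofReal D) (ENNReal.ofReal (1 + M * A)) n := by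
  rw [auxAl_ofReal _ _ hD (by positivity)]
  rcases Nat.eq_zero_or_pos n with rfl | hn
  · have : ∀ y : Fin 0 → X, ‖F (0 + 1) (Fin.cons x y) / p‖ₑ = 1 := by
      intro y
      have : (Fin.cons x y : Fin 1 → X) = ![x] := by
        funext i
        fin_cases i
        rfl
      change ‖F 1 (Fin.cons x y : Fin 1 → X) / p‖ₑ = 1
      rw [this, h0, div_self hp.ne', enorm_one]
    simp_rw [this]
    rw [lintegral_one, Measure.pi_of_empty, measure_univ, ENNReal.one_le_ofReal]
    simp only [Nat.factorial_zero, Nat.cast_one, pow_zero, one_mul]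
    have : 0 < M * A := by positivity
    linarith
  · refine (aux_div_int _ _ _ p hp (hb n hn)).trans (ENNReal.ofReal_le_ofReal ?_)
    rw [mul_div_cancel_right₀ _ hp.ne']
    have : 0 < (n.factorial : ℝ) * D ^ n := by positivity
    nlinarith

end Aux

open CF MeasureTheory in
/-- Proposition 3.4: integral bounds for the two-point kernels
`ω^{(k)}(x₁,x₂;·)`, with constants depending only on `M`, `A` and `d₀`. -/
theorem twoPoint_kernel_integral_bound (d : ℕ) (hd : 1 ≤ d)
    (M A d₀ : ℝ) (hM : 0 < M) (hA : 0 < A) (hd₀ : 0 < d₀) :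
    ∃ C > (0 : ℝ), ∃ χ > (0 : ℝ),
      ∀ (Dρ : ℝ), 0 < Dρ →
      ∀ (ρ1 : Euc d → ℝ) (ρ2 : Euc d → Euc d → ℝ) (ρT : CF (Euc d))
        (ω : Euc d → Euc d → CF (Euc d)),
        (∀ x, 0 < ρ1 x) → Measurable ρ1 →
        IsSymm ρT → (∀ n, Measurable (ρT n)) →
        (∀ x, ρT 1 ![x] = ρ1 x) →
        (∀ x₁ x₂, ρ2 x₁ x₂ = ρT 2 ![x₁, x₂] + ρ1 x₁ * ρ1 x₂) →
        -- Assumption B for m = 1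
        (∀ Λ : Set (Euc d), Bornology.IsBounded Λ → MeasurableSet Λ →
          ∀ (k : ℕ), 1 ≤ k → ∀ x : Euc d,
            ∫⁻ y, ENNReal.ofReal |ρT (k + 1) (Fin.cons x y)| ∂(piRestrict d Λ k) ≤
              ENNReal.ofReal (k.factorial * M * A * Dρ ^ k * ρ1 x)) →
        -- Assumption B for m = 2
        (∀ Λ : Set (Euc d), Bornology.IsBounded Λ → MeasurableSet Λ →
          ∀ (k : ℕ), 1 ≤ k → ∀ x₁ x₂ : Euc d,
            ∫⁻ y, ENNReal.ofReal |ρT (k + 2) (Fin.cons x₁ (Fin.cons x₂ y))|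
                ∂(piRestrict d Λ k) ≤
              ENNReal.ofReal ((k + 1).factorial * M * A ^ 2 * Dρ ^ k *
                (ρ1 x₁ * ρ1 x₂))) →
        -- Assumption C
        (∀ x₁ x₂, ρ1 x₁ * ρ1 x₂ ≤ d₀ * ρ2 x₁ x₂) →
        -- the recursion defining the kernels, base case
        (∀ (x₁ x₂ : Euc d) (y : Fin 1 → Euc d),
          ω x₁ x₂ 1 y = ρT 3 (Fin.cons x₁ (Fin.cons x₂ y)) / ρ2 x₁ x₂) →
        -- the recursion defining the kernels, step
        (∀ (x₁ x₂ : Euc d) (k : ℕ), 2 ≤ k → ∀ y : Fin k → Euc d,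
          ω x₁ x₂ k y =
            ρT (k + 2) (Fin.cons x₁ (Fin.cons x₂ y)) / ρ2 x₁ x₂
            - (ρT 2 ![x₁, x₂] / ρ2 x₁ x₂) *
                ∑ σ ∈ (Finset.univ : Finset (Finset (Fin k) × Finset (Fin k))).filter
                    (fun σ => Disjoint σ.1 σ.2 ∧ σ.1 ∪ σ.2 = Finset.univ),
                  (ρT (σ.1.card + 1) (Fin.cons x₁ (sub y σ.1)) / ρ1 x₁) *
                    (ρT (σ.2.card + 1) (Fin.cons x₂ (sub y σ.2)) / ρ1 x₂)
            - ∑ σ ∈ (Finset.univ :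
                  Finset (Finset (Fin k) × Finset (Fin k) × Finset (Fin k))).filter
                  (fun σ => Disjoint σ.1 σ.2.1 ∧ Disjoint σ.1 σ.2.2 ∧
                    Disjoint σ.2.1 σ.2.2 ∧ σ.1 ∪ σ.2.1 ∪ σ.2.2 = Finset.univ ∧
                    0 < σ.2.2.card ∧ σ.2.2.card < k),
                (ρT (σ.1.card + 1) (Fin.cons x₁ (sub y σ.1)) / ρ1 x₁) *
                  (ρT (σ.2.1.card + 1) (Fin.cons x₂ (sub y σ.2.1)) / ρ1 x₂) *
                  ∑ l ∈ Finset.Icc 1 σ.2.2.card, ((l.factorial : ℝ))⁻¹ *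
                    ∑ π ∈ ordPartsOf l σ.2.2,
                      ∏ i : Fin l, ω x₁ x₂ (π i).card (sub y (π i))
            - ∑ l ∈ Finset.Icc 2 k, ((l.factorial : ℝ))⁻¹ *
                ∑ π ∈ ordPartsOf l (Finset.univ : Finset (Fin k)),
                  ∏ i : Fin l, ω x₁ x₂ (π i).card (sub y (π i))) →
        -- conclusion: the uniform integral bound
        ∀ Λ : Set (Euc d), Bornology.IsBounded Λ → MeasurableSet Λ →
        ∀ (k : ℕ), 1 ≤ k → ∀ x₁ x₂ : Euc d,
          ∫⁻ y, ENNReal.ofReal |ω x₁ x₂ k y| ∂(piRestrict d Λ k) ≤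
            ENNReal.ofReal (k.factorial * C * Dρ ^ k * χ ^ k) := by
  set B : ℝ := 1 + M * A with hB
  have hBp : 0 < B := by positivity
  set T : ℝ := M * A ^ 2 * d₀ with hT
  have hTp : 0 < T := by positivity
  set K : ℝ := T + (1 + d₀) * B ^ 2 with hK
  have hKp : 0 < K := by positivity
  set r : ℝ := 1 / (64 * (1 + K + B ^ 2)) with hr
  have hrp : 0 < r := by positivity
  refine ⟨1 / 4, by norm_num, 1 / r, by positivity, ?_⟩
  intro D hD ρ1 ρ2 ρT ω hρ1 _ _ hmT hT1 hρ2 hB1 hB2 hC hbase hrec Λ hΛb hΛm k hk x₁ x₂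
  have hp12 : 0 < ρ1 x₁ * ρ1 x₂ := mul_pos (hρ1 _) (hρ1 _)
  have hρ2p : 0 < ρ2 x₁ x₂ := by
    have h1 := hC x₁ x₂
    by_contra hneg
    nlinarith
  have hratio : ρ1 x₁ * ρ1 x₂ / ρ2 x₁ x₂ ≤ d₀ := (div_le_iff₀ hρ2p).2 (hC x₁ x₂)
  have hratio0 : 0 < ρ1 x₁ * ρ1 x₂ / ρ2 x₁ x₂ := by positivity
  let f1 : CF (Euc d) := fun n y => ρT (n + 1) (Fin.cons x₁ y) / ρ1 x₁
  let f2 : CF (Euc d) := fun n y => ρT (n + 1) (Fin.cons x₂ y) / ρ1 x₂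
  let t : CF (Euc d) := fun n y => ρT (n + 2) (Fin.cons x₁ (Fin.cons x₂ y)) / ρ2 x₁ x₂
  have mcons : ∀ (x : Euc d) (n : ℕ),
      Measurable fun y : Fin n → Euc d => (Fin.cons x y : Fin (n + 1) → Euc d) := by
    intro x n
    refine measurable_pi_lambda _ fun i => ?_
    refine Fin.cases ?_ (fun j => ?_) i
    · exact measurable_const
    · exact measurable_pi_apply j
  have m1 : ∀ n, Measurable (f1 n) := fun n => ((hmT _).comp (mcons x₁ n)).div_const _
  have m2 : ∀ n, Measurable (f2 n) := fun n => ((hmT _).comp (mcons x₂ n)).div_const _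
  have mt : ∀ n, Measurable (t n) := fun n =>
    ((hmT _).comp ((mcons x₁ (n + 1)).comp (mcons x₂ n))).div_const _
  have hrec' : AuxRec f1 f2 t (ω x₁ x₂) (ρT 2 ![x₁, x₂] / ρ2 x₁ x₂) :=
    fun k hk y => hrec x₁ x₂ k hk y
  have hc : ‖ρT 2 ![x₁, x₂] / ρ2 x₁ x₂‖ₑ ≤ ENNReal.ofReal (1 + d₀) := by
    rw [Real.enorm_eq_ofReal_abs]
    refine ENNReal.ofReal_le_ofReal ?_
    have : ρT 2 ![x₁, x₂] / ρ2 x₁ x₂ = 1 - ρ1 x₁ * ρ1 x₂ / ρ2 x₁ x₂ := by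
      rw [eq_sub_iff_add_eq, ← add_div, ← hρ2, div_self hρ2p.ne']
    rw [this, abs_le]
    constructor <;> linarith
  set μ : Measure (Euc d) := volume.restrict Λ with hμ
  have htb : ∀ n, 1 ≤ n → ∫⁻ z, ‖t n z‖ₑ ∂(Measure.pi fun _ => μ) ≤
      ENNReal.ofReal T * auxH (ENNReal.ofReal D) n := by
    intro n hn
    refine (aux_div_int _ _ _ _ hρ2p (hB2 Λ hΛb hΛm n hn x₁ x₂)).trans ?_
    rw [auxH_ofReal D hD n hn, ← ENNReal.ofReal_mul hTp.le]
    refine ENNReal.ofReal_le_ofReal ?_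
    calc _ = ((n + 1).factorial * M * A ^ 2 * D ^ n) * (ρ1 x₁ * ρ1 x₂ / ρ2 x₁ x₂) := by ring
      _ ≤ ((n + 1).factorial * M * A ^ 2 * D ^ n) * d₀ := by gcongr
      _ = _ := by rw [hT]; ring
  let g : ℕ → ENNReal := fun n => ∫⁻ z, ‖ω x₁ x₂ n z‖ₑ ∂(Measure.pi fun _ => μ)
  have hstep := aux_step μ f1 f2 t (ω x₁ x₂) _ m1 m2 mt (fun y => hbase x₁ x₂ y) hrec'
    (ENNReal.ofReal D) (ENNReal.ofReal B) (ENNReal.ofReal T) (ENNReal.ofReal (1 + d₀))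
    (aux_one_point μ ρT x₁ (ρ1 x₁) M A D hM hA hD (hρ1 _) (hT1 _)
      (fun k hk => hB1 Λ hΛb hΛm k hk x₁))
    (aux_one_point μ ρT x₂ (ρ1 x₂) M A D hM hA hD (hρ1 _) (hT1 _)
      (fun k hk => hB1 Λ hΛb hΛm k hk x₂)) htb hc g (fun _ => rfl)
  have hwΔ : ENNReal.ofReal (r / D) * ENNReal.ofReal D = ENNReal.ofReal r := by
    rw [← ENNReal.ofReal_mul (by positivity), div_mul_cancel₀ _ hD.ne']
  have hq : (4⁻¹ : ENNReal) = ENNReal.ofReal (1 / 4) := by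
    rw [one_div, ENNReal.ofReal_inv_of_pos (by norm_num)]
    norm_num
  have hr1 : r * (64 * (1 + K + B ^ 2)) = 1 := by
    rw [hr]; field_simp
  have hB2p : 0 < B ^ 2 := by positivity
  have hrK : r * K ≤ 1 / 64 := by nlinarith
  have hrB : r * B ^ 2 ≤ 1 / 64 := by nlinarith
  have hr64 : r ≤ 1 / 64 := by nlinarith
  have hN : auxN (ENNReal.ofReal (r / D)) (auxH (ENNReal.ofReal D)) ≤ ENNReal.ofReal (4 * r) := by
    refine (auxN_H _ _ ?_).trans ?_
    · rw [hwΔ, show (2 : ENNReal) = ENNReal.ofReal 2 by norm_num,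
        ← ENNReal.ofReal_mul (by norm_num), ← ENNReal.ofReal_inv_of_pos (by norm_num)]
      exact ENNReal.ofReal_le_ofReal (by linarith)
    · rw [hwΔ, ENNReal.ofReal_mul (by norm_num)]
      norm_num
  have hfin := aux_recursion (ENNReal.ofReal (r / D))
    (ENNReal.ofReal T + ENNReal.ofReal (1 + d₀) * ENNReal.ofReal B ^ 2) (ENNReal.ofReal B ^ 2)
    (auxH (ENNReal.ofReal D)) g hstep ?_ ?_ (k + 1)
  · have hterm : ENNReal.ofReal (r / D) ^ k * (k.factorial : ENNReal)⁻¹ * g k ≤ 4⁻¹ := by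
      refine le_trans ?_ hfin
      have := ENNReal.le_tsum (f := fun n => ENNReal.ofReal (r / D) ^ n *
        (n.factorial : ENNReal)⁻¹ * auxTr g (k + 1) n) k
      simp only [auxTr, if_pos (show 1 ≤ k ∧ k < k + 1 from ⟨hk, Nat.lt_succ_self k⟩)] at this
      exact this
    have hgoal : ∫⁻ y, ENNReal.ofReal |ω x₁ x₂ k y| ∂(piRestrict d Λ k) = g k := by
      simp only [g, Real.enorm_eq_ofReal_abs]
      rfl
    rw [hgoal]
    have hs : 0 < (r / D) ^ k * (k.factorial : ℝ)⁻¹ := by positivity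
    have hse : ENNReal.ofReal (r / D) ^ k * (k.factorial : ENNReal)⁻¹ =
        ENNReal.ofReal ((r / D) ^ k * (k.factorial : ℝ)⁻¹) := by
      rw [ENNReal.ofReal_mul (by positivity), ENNReal.ofReal_pow (by positivity),
        ENNReal.ofReal_inv_of_pos (by positivity), ENNReal.ofReal_natCast]
    rw [hse, hq] at hterm
    have hinv : ENNReal.ofReal ((r / D) ^ k * (k.factorial : ℝ)⁻¹)⁻¹ *
        ENNReal.ofReal ((r / D) ^ k * (k.factorial : ℝ)⁻¹) = 1 := by
      rw [← ENNReal.ofReal_mul (by positivity), inv_mul_cancel₀ hs.ne', ENNReal.ofReal_one]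
    calc g k = ENNReal.ofReal ((r / D) ^ k * (k.factorial : ℝ)⁻¹)⁻¹ *
          (ENNReal.ofReal ((r / D) ^ k * (k.factorial : ℝ)⁻¹) * g k) := by
          rw [← mul_assoc, hinv, one_mul]
      _ ≤ ENNReal.ofReal ((r / D) ^ k * (k.factorial : ℝ)⁻¹)⁻¹ * ENNReal.ofReal (1 / 4) := by
          gcongr
      _ = _ := by
          rw [← ENNReal.ofReal_mul (by positivity)]
          congr 1
          rw [mul_inv, inv_inv, div_pow, inv_div, one_div r, inv_pow]
          field_simp
  · rw [hq, ← ENNReal.ofReal_pow hBp.le, ← ENNReal.ofReal_mul (by positivity),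
      ← ENNReal.ofReal_add (by positivity) (by positivity), ← ENNReal.ofReal_pow (by norm_num)]
    refine (mul_le_mul' le_rfl hN).trans ?_
    rw [← ENNReal.ofReal_mul (by positivity)]
    refine ENNReal.ofReal_le_ofReal ?_
    rw [← hK]
    nlinarith
  · rw [hq, ← ENNReal.ofReal_pow hBp.le, ← ENNReal.ofReal_pow (by norm_num)]
    refine (mul_le_mul' le_rfl hN).trans ?_
    rw [← ENNReal.ofReal_mul (by positivity)]
    refine ENNReal.ofReal_le_ofReal ?_
    nlinarith
end

section
/- (Generating-function bound for the majorant recursion, core of the proof of Proposition 3.4.) Let M, A, D, d₀ > 0. Define sequences a₀ = 1, a_k = k!·M·A·D^k for k ≥ 1; c_k = d₀·M·A²·(k+1)!·D^k for k ≥ 0 (so c₀ = d₀MA²); and (w_k)_{k≥1} by w₁ = c₁ + 2c₀a₁ and, for k ≥ 2, w_k = c_k + B_k(w₁,…,w_{k−1},0) + c₀ Σ_{l=0}^{k} C(k,l) a_l a_{k−l} + Σ_{l=1}^{k−1} C(k,l) B_l(w₁,…,w_l) Σ_{m=0}^{k−l} C(k−l,m) a_m a_{k−l−m}, where C(k,l)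 is the binomial coefficient. Then there exist constants C > 0 and χ > 0, depending only on M, A and d₀ (and not on D), such that w_k ≤ C · k! · D^k · χ^k for all k ≥ 1. -/
open MeasureTheory Finset

/-- The `k`-th exponential Bell polynomial `B_k(t₁,…,t_k)`, as a sum over set
partitions of `{1,…,k}` into nonempty blocks (with `B₀ = 1`). -/
noncomputable def bell (t : ℕ → ℝ) (k : ℕ) : ℝ :=
  ∑ P ∈ CF.setPartitions k, ∏ B ∈ P, t B.card

/-- Partitions of a finset. -/
def mbParts {α : Type} [Fintype α] [DecidableEq α] (S : Finset α) : Finset (Finset (Finset α)) :=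
  Finset.univ.filter fun P =>
    (∀ B ∈ P, B.Nonempty) ∧ (∀ B ∈ P, ∀ B' ∈ P, B ≠ B' → Disjoint B B') ∧
      (∀ a : α, a ∈ S ↔ ∃ B ∈ P, a ∈ B)

noncomputable def mbBell {α : Type} [Fintype α] [DecidableEq α] (t : ℕ → ℝ) (S : Finset α) : ℝ :=
  ∑ P ∈ mbParts S, ∏ B ∈ P, t B.card

noncomputable def mbE (t : ℕ → ℝ) : ℕ → ℝ
  | 0 => 1
  | n + 1 => ∑ j : Fin (n + 1), (n.choose j : ℝ) * t (j + 1) * mbE t (n - j)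

lemma mbE_nonneg (t : ℕ → ℝ) (ht : ∀ j, 0 ≤ t j) (n : ℕ) : 0 ≤ mbE t n := by
  induction n using Nat.strong_induction_on with
  | _ n ih =>
    cases n with
    | zero => simp [mbE]
    | succ n =>
      rw [mbE]
      refine Finset.sum_nonneg fun j _ => ?_
      have := ih (n - j) (by omega)
      have := ht (j + 1)
      positivity

lemma mbE_succ (t : ℕ → ℝ) (n : ℕ) :
    mbE t (n + 1) = ∑ j ∈ Finset.range (n + 1), (n.choose j : ℝ) * t (j + 1) * mbE t (n - j) := by
  rw [mbE, Finset.sum_range]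

lemma mbBell_rec {α : Type} [Fintype α] [DecidableEq α] (t : ℕ → ℝ) (ht : ∀ j, 0 ≤ t j)
    (S : Finset α) (s : α) (hs : s ∈ S) :
    mbBell t S ≤ ∑ B ∈ (S.erase s).powerset, t (B.card + 1) * mbBell t ((S.erase s) \ B) := by
  classical
  unfold mbBell
  simp_rw [Finset.mul_sum]
  rw [Finset.sum_sigma']
  set g : (Σ _ : Finset α, Finset (Finset α)) → Finset (Finset α) :=
    fun x => insert (insert s x.1) x.2 with hg
  have hf : ∀ P : Finset (Finset α), 0 ≤ ∏ B ∈ P, t B.card :=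
    fun P => Finset.prod_nonneg fun _ _ => ht _
  calc _ ≤ ∑ P ∈ (((S.erase s).powerset).sigma
            (fun B => mbParts ((S.erase s) \ B))).image g, ∏ B ∈ P, t B.card := by
        refine Finset.sum_le_sum_of_subset_of_nonneg ?_ (fun P _ _ => hf P)
        intro P hP
        simp only [mbParts, Finset.mem_filter, Finset.mem_univ, true_and] at hP
        obtain ⟨h1, h2, h3⟩ := hP
        obtain ⟨B, hB, hsB⟩ := (h3 s).1 hs
        rw [Finset.mem_image]
        refine ⟨⟨B.erase s, P.erase B⟩, ?_, ?_⟩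
        · simp only [Finset.mem_sigma, Finset.mem_powerset, mbParts, Finset.mem_filter,
            Finset.mem_univ, true_and]
          refine ⟨?_, ?_, ?_, ?_⟩
          · exact Finset.erase_subset_erase _ fun a ha => (h3 a).2 ⟨B, hB, ha⟩
          · exact fun B' hB' => h1 _ (Finset.mem_of_mem_erase hB')
          · exact fun B' hB' B'' hB'' => h2 _ (Finset.mem_of_mem_erase hB') _
              (Finset.mem_of_mem_erase hB'')
          · intro a
            constructor
            · intro ha
              simp only [Finset.mem_sdiff, Finset.mem_erase, not_and] at ha
              obtain ⟨B', hB', haB'⟩ := (h3 a).1 ha.1.2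
              refine ⟨B', Finset.mem_erase.2 ⟨?_, hB'⟩, haB'⟩
              rintro rfl
              exact ha.2 ha.1.1 haB'
            · rintro ⟨B', hB', haB'⟩
              rw [Finset.mem_erase] at hB'
              have hd := h2 B' hB'.2 B hB hB'.1
              have haB : a ∉ B := Finset.disjoint_left.1 hd haB'
              simp only [Finset.mem_sdiff, Finset.mem_erase, not_and]
              refine ⟨⟨?_, (h3 a).2 ⟨B', hB'.2, haB'⟩⟩, fun _ => haB⟩
              rintro rfl
              exact haB hsB
        · simp only [hg]
          rw [Finset.insert_erase hsB, Finset.insert_erase hB]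
    _ ≤ ∑ x ∈ ((S.erase s).powerset).sigma
            (fun B => mbParts ((S.erase s) \ B)), ∏ B ∈ g x, t B.card := by
        exact Finset.sum_image_le_of_nonneg (fun P _ => hf P)
    _ = _ := by
        refine Finset.sum_congr rfl fun x hx => ?_
        simp only [Finset.mem_sigma, Finset.mem_powerset, mbParts, Finset.mem_filter,
            Finset.mem_univ, true_and] at hx
        obtain ⟨hx1, h1, h2, h3⟩ := hx
        have hn : insert s x.1 ∉ x.2 := by
          intro h
          have := (h3 s).2 ⟨_, h, Finset.mem_insert_self _ _⟩
          simp at this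
        have hn2 : s ∉ x.1 := fun h => by simpa using hx1 h
        simp only [hg]
        rw [Finset.prod_insert hn, Finset.card_insert_of_notMem hn2]

lemma mbBell_le {α : Type} [Fintype α] [DecidableEq α] (t : ℕ → ℝ) (ht : ∀ j, 0 ≤ t j)
    (n : ℕ) : ∀ (S : Finset α), S.card = n → mbBell t S ≤ mbE t n := by
  induction n using Nat.strong_induction_on with
  | _ n ih =>
    intro S hS
    cases n with
    | zero =>
      rw [Finset.card_eq_zero] at hS
      subst hS
      have : mbParts (∅ : Finset α) ⊆ {∅} := by
        intro P hP
        simp only [mbParts, Finset.mem_filter, Finset.mem_univ, true_and] at hP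
        obtain ⟨h1, h2, h3⟩ := hP
        rw [Finset.mem_singleton, Finset.eq_empty_iff_forall_notMem]
        intro B hB
        obtain ⟨a, ha⟩ := h1 B hB
        simpa using (h3 a).2 ⟨B, hB, ha⟩
      unfold mbBell
      refine (Finset.sum_le_sum_of_subset_of_nonneg this
        (fun P _ _ => Finset.prod_nonneg fun _ _ => ht _)).trans ?_
      simp [mbE]
    | succ n =>
      obtain ⟨s, hs⟩ : S.Nonempty := by rw [← Finset.card_pos]; omega
      have hc : (S.erase s).card = n := by rw [Finset.card_erase_of_mem hs]; omega
      refine (mbBell_rec t ht S s hs).trans ?_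
      calc _ ≤ ∑ B ∈ (S.erase s).powerset, t (B.card + 1) * mbE t (n - B.card) := by
            refine Finset.sum_le_sum fun B hB => ?_
            refine mul_le_mul_of_nonneg_left (ih _ (by omega) _ ?_) (ht _)
            rw [Finset.card_sdiff_of_subset (Finset.mem_powerset.1 hB), hc]
        _ = _ := by
            rw [Finset.sum_powerset_apply_card (fun j => t (j + 1) * mbE t (n - j)), hc, mbE_succ]
            refine Finset.sum_congr rfl fun j _ => ?_
            rw [nsmul_eq_mul]; ring

lemma bell_le_mbE (t : ℕ → ℝ) (ht : ∀ j, 0 ≤ t j) (k : ℕ) : bell t k ≤ mbE t k := by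
  have := mbBell_le t ht k (Finset.univ : Finset (Fin k)) (by simp)
  refine le_trans (le_of_eq ?_) this
  unfold bell mbBell CF.setPartitions mbParts
  simp

lemma conv_le (f g : ℕ → ℝ) (hf : ∀ i, 0 ≤ f i) (hg : ∀ i, 0 ≤ g i) (N : ℕ) :
    ∑ k ∈ Finset.range N, ∑ i ∈ Finset.range (k + 1), f i * g (k - i) ≤
      (∑ i ∈ Finset.range N, f i) * ∑ i ∈ Finset.range N, g i := by
  rw [Finset.sum_mul_sum]
  rw [Finset.sum_comm' (t' := Finset.range N) (s' := fun i => Finset.Ico i N)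
    (by intro x y; simp; omega)]
  refine Finset.sum_le_sum fun i hi => ?_
  rw [Finset.sum_Ico_eq_sum_range]
  simp only [Nat.add_sub_cancel_left]
  exact Finset.sum_le_sum_of_subset_of_nonneg (Finset.range_mono (by omega))
    fun j _ _ => mul_nonneg (hf _) (hg _)

lemma mbE_gf (t : ℕ → ℝ) (ht : ∀ j, 0 ≤ t j) (N : ℕ) (x : ℝ) (hx : 0 ≤ x) :
    ∑ k ∈ Finset.range (N + 1), mbE t k / k.factorial * x ^ k ≤
      Real.exp (∑ j ∈ Finset.range N, t (j + 1) / (j + 1).factorial * x ^ (j + 1)) := by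
  set b : ℕ → ℝ := fun k => mbE t k / k.factorial with hb
  have hb0 : ∀ k, 0 ≤ b k := fun k => div_nonneg (mbE_nonneg t ht k) (by positivity)
  have hbrec : ∀ n, b (n + 1) * (n + 1) =
      ∑ j ∈ Finset.range (n + 1), t (j + 1) / j.factorial * b (n - j) := by
    intro n
    simp only [hb]
    rw [mbE_succ, Nat.factorial_succ]
    push_cast
    have : (n.factorial : ℝ) ≠ 0 := by positivity
    have h2 : (n + 1 : ℝ) ≠ 0 := by positivity
    rw [div_mul_eq_mul_div, mul_comm (n + 1 : ℝ), mul_div_mul_right _ _ h2, Finset.sum_div]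
    refine Finset.sum_congr rfl fun j hj => ?_
    rw [Nat.cast_choose ℝ (Finset.mem_range_succ_iff.1 hj)]
    field_simp
  set P : ℝ → ℝ := fun y => ∑ k ∈ Finset.range (N + 1), b k * y ^ k with hP
  set T : ℝ → ℝ := fun y => ∑ j ∈ Finset.range N, t (j + 1) / (j + 1).factorial * y ^ (j + 1)
    with hT
  have dP : ∀ y, HasDerivAt P (∑ k ∈ Finset.range N, b (k + 1) * (k + 1) * y ^ k) y := by
    intro y
    have : HasDerivAt P (∑ k ∈ Finset.range (N + 1), b k * (k * y ^ (k - 1))) y :=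
      HasDerivAt.fun_sum fun k _ => (hasDerivAt_pow k y).const_mul (b k)
    rw [Finset.sum_range_succ'] at this
    convert this using 1
    simp [mul_assoc]
  have dT : ∀ y, HasDerivAt T (∑ k ∈ Finset.range N, t (k + 1) / k.factorial * y ^ k) y := by
    intro y
    have : HasDerivAt T (∑ k ∈ Finset.range N,
        t (k + 1) / (k + 1).factorial * ((k + 1 : ℕ) * y ^ (k + 1 - 1))) y :=
      HasDerivAt.fun_sum fun k _ => (hasDerivAt_pow (k + 1) y).const_mul _
    convert this using 1
    refine Finset.sum_congr rfl fun k _ => ?_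
    rw [Nat.factorial_succ]
    push_cast
    have h2 : (k + 1 : ℝ) ≠ 0 := by positivity
    have : (k.factorial : ℝ) ≠ 0 := by positivity
    field_simp
  have key : ∀ y, 0 ≤ y → ∑ k ∈ Finset.range N, b (k + 1) * (k + 1) * y ^ k ≤
      (∑ k ∈ Finset.range N, t (k + 1) / k.factorial * y ^ k) * P y := by
    intro y hy
    calc _ = ∑ k ∈ Finset.range N, ∑ i ∈ Finset.range (k + 1),
          (t (i + 1) / i.factorial * y ^ i) * (b (k - i) * y ^ (k - i)) := by
          refine Finset.sum_congr rfl fun k _ => ?_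
          rw [hbrec, Finset.sum_mul]
          refine Finset.sum_congr rfl fun i hi => ?_
          have : y ^ k = y ^ i * y ^ (k - i) := by
            rw [← pow_add]; congr 1; have := Finset.mem_range.1 hi; omega
          rw [this]; ring
      _ ≤ _ := conv_le (fun i => t (i + 1) / i.factorial * y ^ i) (fun i => b i * y ^ i)
            (fun i => by have := ht (i + 1); positivity)
            (fun i => by have := hb0 i; positivity) N
      _ ≤ _ := by
          refine mul_le_mul_of_nonneg_left ?_
            (Finset.sum_nonneg fun i _ => by have := ht (i + 1); positivity)
          exact Finset.sum_le_sum_of_subset_of_nonneg (Finset.range_mono (by omega))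
            fun i _ _ => by have := hb0 i; positivity
  have dQ : ∀ y, HasDerivAt (fun y => P y * Real.exp (-T y)) _ y :=
    fun y => (dP y).mul ((dT y).neg.exp)
  have anti : AntitoneOn (fun y => P y * Real.exp (-T y)) (Set.Ici 0) := by
    refine antitoneOn_of_deriv_nonpos (convex_Ici 0)
      (fun y _ => (dQ y).continuousAt.continuousWithinAt)
      (fun y _ => (dQ y).differentiableAt.differentiableWithinAt) ?_
    intro y hy
    rw [interior_Ici, Set.mem_Ioi] at hy
    rw [(dQ y).deriv]
    have := key y hy.le
    have he := Real.exp_pos (-T y)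
    simp only [Pi.neg_apply]
    nlinarith
  have h := anti (Set.mem_Ici.2 le_rfl) (Set.mem_Ici.2 hx) hx
  have hP0 : P 0 = 1 := by
    simp only [hP]; rw [Finset.sum_range_succ']; simp [hb, mbE]
  have hT0 : T 0 = 0 := by simp [hT]
  simp only [hP0, hT0, neg_zero, Real.exp_zero, mul_one] at h
  rw [Real.exp_neg, ← div_eq_mul_inv, div_le_one (Real.exp_pos _)] at h
  exact h

lemma bell_gf (t : ℕ → ℝ) (ht : ∀ j, 0 ≤ t j) (N : ℕ) (x : ℝ) (hx : 0 ≤ x) :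
    ∑ k ∈ Finset.range (N + 1), bell t k / k.factorial * x ^ k ≤
      Real.exp (∑ j ∈ Finset.range N, t (j + 1) / (j + 1).factorial * x ^ (j + 1)) := by
  refine le_trans (Finset.sum_le_sum fun k _ => ?_) (mbE_gf t ht N x hx)
  have := bell_le_mbE t ht k
  gcongr

lemma setPart_mem {k : ℕ} {P : Finset (Finset (Fin k))} (hP : P ∈ CF.setPartitions k) :
    ∀ B ∈ P, 1 ≤ B.card ∧ B.card ≤ k := by
  intro B hB
  simp only [CF.setPartitions, Finset.mem_filter, Finset.mem_univ, true_and] at hP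
  exact ⟨Finset.card_pos.2 (hP.1 B hB), by simpa using Finset.card_le_univ B⟩

lemma bell_nonneg (t : ℕ → ℝ) (k : ℕ) (h : ∀ j, 1 ≤ j → j ≤ k → 0 ≤ t j) : 0 ≤ bell t k :=
  Finset.sum_nonneg fun _ hP => Finset.prod_nonneg fun B hB =>
    h _ (setPart_mem hP B hB).1 (setPart_mem hP B hB).2

lemma bell_congr (t t' : ℕ → ℝ) (k : ℕ) (h : ∀ j, 1 ≤ j → j ≤ k → t j = t' j) :
    bell t k = bell t' k :=
  Finset.sum_congr rfl fun _ hP => Finset.prod_congr rfl fun B hB =>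
    h _ (setPart_mem hP B hB).1 (setPart_mem hP B hB).2

lemma bell_zero (t : ℕ → ℝ) : bell t 0 = 1 := by
  have : CF.setPartitions 0 = {∅} := by decide
  simp [bell, this]

lemma bell_split (t : ℕ → ℝ) (k : ℕ) (hk : 1 ≤ k) :
    bell t k = bell (fun j => if j = k then 0 else t j) k + t k := by
  have hne : (Finset.univ : Finset (Fin k)).Nonempty := ⟨⟨0, hk⟩, Finset.mem_univ _⟩
  have hm : ({Finset.univ} : Finset (Finset (Fin k))) ∈ CF.setPartitions k := by
    simp only [CF.setPartitions, Finset.mem_filter, Finset.mem_univ, true_and]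
    refine ⟨?_, ?_, ?_⟩
    · intro B hB; rw [Finset.mem_singleton.1 hB]; exact hne
    · intro B hB B' hB' h
      exact absurd ((Finset.mem_singleton.1 hB).trans (Finset.mem_singleton.1 hB').symm) h
    · intro a; exact ⟨Finset.univ, by simp, by simp⟩
  unfold bell
  rw [← Finset.sum_erase_add _ _ hm, ← Finset.sum_erase_add (CF.setPartitions k) _ hm]
  simp only [Finset.prod_singleton, Finset.card_univ, Fintype.card_fin, if_true, add_zero]
  congr 1
  refine Finset.sum_congr rfl fun P hP => Finset.prod_congr rfl fun B hB => ?_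
  rw [if_neg]
  intro hc
  rw [Finset.mem_erase] at hP
  apply hP.1
  have hBu : B = Finset.univ := (Finset.card_eq_iff_eq_univ B).1 (by simpa using hc)
  have hP2 := hP.2
  simp only [CF.setPartitions, Finset.mem_filter, Finset.mem_univ, true_and] at hP2
  refine Finset.eq_singleton_iff_unique_mem.2 ⟨hBu ▸ hB, fun B' hB' => ?_⟩
  by_contra hne'
  have hd := hP2.2.1 B' hB' B hB (by rw [hBu]; exact hne')
  obtain ⟨a, ha⟩ := hP2.1 B' hB'
  exact Finset.disjoint_left.1 hd ha (by rw [hBu]; simp)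

lemma mb_geom (q : ℝ) (h0 : 0 ≤ q) (h1 : q ≤ 1 / 2) (N : ℕ) :
    ∑ j ∈ Finset.range N, q ^ (j + 1) ≤ 2 * q := by
  have : ∑ j ∈ Finset.range N, q ^ j ≤ 2 - 2 * q ^ N := by
    induction N with
    | zero => simp
    | succ N ih =>
      rw [Finset.sum_range_succ, pow_succ]
      have := pow_nonneg h0 N
      nlinarith
  simp_rw [pow_succ]
  rw [← Finset.sum_mul]
  have := pow_nonneg h0 N
  nlinarith

lemma mb_hat_conv (X : ℝ) (k l : ℕ) (hl : l ≤ k) (f g : ℝ) :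
    (k.choose l : ℝ) * f * g / k.factorial * X ^ k =
      (f / l.factorial * X ^ l) * (g / (k - l).factorial * X ^ (k - l)) := by
  have : X ^ k = X ^ l * X ^ (k - l) := by rw [← pow_add]; congr 1; omega
  rw [this, Nat.cast_choose ℝ hl]
  have : (k.factorial : ℝ) ≠ 0 := by positivity
  field_simp

lemma mb_h_bound (K D x : ℝ) (hK : 0 < K) (hD : 0 < D) (hx : 0 < x) (a : ℕ → ℝ) (ha0 : a 0 = 1)
    (ha : ∀ k : ℕ, 1 ≤ k → a k = k.factorial * K * D ^ k) (k : ℕ) :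
    (∑ m ∈ Finset.range (k + 1), (k.choose m : ℝ) * a m * a (k - m)) / k.factorial * (x / D) ^ k
      ≤ (1 + K) ^ 2 * (2 * x) ^ k := by
  have hα : ∀ m, 0 ≤ a m / m.factorial * (x / D) ^ m ∧
      a m / m.factorial * (x / D) ^ m ≤ (1 + K) * x ^ m := by
    intro m
    rcases Nat.eq_zero_or_pos m with rfl | hm
    · simp [ha0, hK.le]
    · have : a m / m.factorial * (x / D) ^ m = K * x ^ m := by
        rw [ha m hm, div_pow]
        have : (m.factorial : ℝ) ≠ 0 := by positivity
        field_simp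
      rw [this]
      have := pow_pos hx m
      constructor
      · positivity
      · nlinarith
  rw [Finset.sum_div, Finset.sum_mul]
  calc _ ≤ ∑ m ∈ Finset.range (k + 1), (1 + K) ^ 2 * x ^ k := by
        refine Finset.sum_le_sum fun m hm => ?_
        have hm' : m ≤ k := Finset.mem_range_succ_iff.1 hm
        rw [mb_hat_conv _ _ _ hm']
        calc _ ≤ ((1 + K) * x ^ m) * ((1 + K) * x ^ (k - m)) :=
              mul_le_mul (hα m).2 (hα _).2 (hα _).1 (by positivity)
          _ = _ := by
              have : x ^ k = x ^ m * x ^ (k - m) := by rw [← pow_add]; congr 1; omega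
              rw [this]; ring
    _ = (k + 1 : ℕ) * ((1 + K) ^ 2 * x ^ k) := by simp
    _ ≤ (2 ^ k : ℕ) * ((1 + K) ^ 2 * x ^ k) := by
        gcongr
        exact Nat.lt_two_pow_self
    _ = _ := by push_cast; rw [mul_pow]; ring

lemma mb_main (L γ q X : ℝ) (hL : 0 < L) (hγ : 0 < γ) (hq : 0 < q) (hq2 : q ≤ 1 / 2) (hX : 0 < X)
    (h1 : L * (1 + γ) * (2 * q) ≤ 1 / 16) (h2 : γ * (2 * q) ≤ 1 / 16)
    (c h w : ℕ → ℝ) (hc0 : ∀ k, 0 ≤ c k) (hh0 : ∀ k, 0 ≤ h k) (hcL : c 0 = L)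
    (hc : ∀ k, c k / k.factorial * X ^ k ≤ L * q ^ k)
    (hh : ∀ k, h k / k.factorial * X ^ k ≤ γ * q ^ k)
    (hw : ∀ k, 1 ≤ k → w k = c k + bell (fun j => if j = k then 0 else w j) k + c 0 * h k +
      ∑ l ∈ Finset.Icc 1 (k - 1), (k.choose l : ℝ) * bell w l * h (k - l)) (n : ℕ) (hn : 1 ≤ n) :
    w n / n.factorial * X ^ n ≤ 1 / 4 := by
  have hw0 : ∀ k, 1 ≤ k → 0 ≤ w k := by
    intro k
    induction k using Nat.strong_induction_on with
    | _ k ih =>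
      intro hk
      rw [hw k hk]
      have e1 : 0 ≤ bell (fun j => if j = k then 0 else w j) k := by
        refine bell_nonneg _ _ fun j hj1 hj2 => ?_
        by_cases hjk : j = k
        · simp [hjk]
        · simp only [hjk, if_false]; exact ih j (by omega) hj1
      have e2 : 0 ≤ ∑ l ∈ Finset.Icc 1 (k - 1), (k.choose l : ℝ) * bell w l * h (k - l) := by
        refine Finset.sum_nonneg fun l hl => ?_
        rw [Finset.mem_Icc] at hl
        have : 0 ≤ bell w l := bell_nonneg _ _ fun j hj1 hj2 => ih j (by omega) hj1
        have := hh0 (k - l)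
        positivity
      have := hc0 k; have := hc0 0; have := hh0 k
      positivity
  set u : ℕ → ℝ := fun j => w (j + 1) / (j + 1).factorial * X ^ (j + 1) with hu
  have hu0 : ∀ j, 0 ≤ u j := fun j => by have := hw0 (j + 1) (by omega); simp only [hu]; positivity
  have main : ∀ n, ∑ j ∈ Finset.range n, u j ≤ 1 / 4 := by
    intro n
    induction n with
    | zero => simp
    | succ n ih =>
      set S := ∑ j ∈ Finset.range n, u j with hS
      have hS0 : 0 ≤ S := Finset.sum_nonneg fun j _ => hu0 j
      set t : ℕ → ℝ := fun j => if 1 ≤ j ∧ j ≤ n then w j else 0 with ht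
      have ht0 : ∀ j, 0 ≤ t j := by
        intro j
        simp only [ht]
        split_ifs with hj
        · exact hw0 j hj.1
        · exact le_rfl
      set f : ℕ → ℝ := fun j => bell t (j + 1) / (j + 1).factorial * X ^ (j + 1) with hf
      have hf0 : ∀ j, 0 ≤ f j := fun j => by
        have := bell_nonneg t (j + 1) fun j _ _ => ht0 j
        simp only [hf]; positivity
      set v : ℕ → ℝ := fun j => t (j + 1) / (j + 1).factorial * X ^ (j + 1) with hv
      have hvS : ∑ j ∈ Finset.range (n + 1), v j = S := by
        rw [Finset.sum_range_succ]
        have : v n = 0 := by simp [hv, ht]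
        rw [this, add_zero]
        refine Finset.sum_congr rfl fun j hj => ?_
        have := Finset.mem_range.1 hj
        simp only [hv, ht, hu]
        rw [if_pos (by omega)]
      have hgf := bell_gf t ht0 (n + 1) X hX.le
      rw [hvS, Finset.sum_range_succ'] at hgf
      simp only [bell_zero, Nat.factorial_zero, Nat.cast_one, pow_zero, div_one, mul_one] at hgf
      change ∑ j ∈ Finset.range (n + 1), f j + 1 ≤ _ at hgf
      set g : ℕ → ℝ := fun j => if j = 0 then 0 else γ * q ^ j with hg
      have hg0 : ∀ j, 0 ≤ g j := by
        intro j; simp only [hg]; split_ifs <;> positivity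
      have hgs : ∑ j ∈ Finset.range (n + 1), g j ≤ γ * (2 * q) := by
        rw [Finset.sum_range_succ']
        simp only [hg, Nat.add_eq_zero_iff, one_ne_zero, and_false, if_false, if_true, add_zero]
        rw [← Finset.mul_sum]
        exact mul_le_mul_of_nonneg_left (mb_geom q hq.le hq2 n) hγ.le
      have step : ∀ k ∈ Finset.range (n + 1), u k ≤ L * (1 + γ) * q ^ (k + 1) + (f k - v k) +
          ∑ i ∈ Finset.range (k + 1), f i * g (k - i) := by
        intro k hk
        have hkn : k ≤ n := Finset.mem_range_succ_iff.1 hk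
        have hb : bell (fun j => if j = k + 1 then 0 else w j) (k + 1) = bell t (k + 1) - t (k + 1) := by
          rw [bell_split t (k + 1) (by omega), add_sub_cancel_right]
          refine bell_congr _ _ _ fun j hj1 hj2 => ?_
          by_cases hj : j = k + 1
          · simp [hj]
          · simp only [hj, if_false, ht]
            rw [if_pos (by omega)]
        have hconv : (∑ l ∈ Finset.Icc 1 (k + 1 - 1),
            ((k + 1).choose l : ℝ) * bell w l * h (k + 1 - l)) / (k + 1).factorial * X ^ (k + 1) ≤
            ∑ i ∈ Finset.range (k + 1), f i * g (k - i) := by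
          have hI : Finset.Icc 1 (k + 1 - 1) = Finset.Ico 1 (k + 1) := by
            ext l; simp only [Finset.mem_Icc, Finset.mem_Ico]; omega
          rw [hI, Finset.sum_Ico_eq_sum_range, Finset.sum_range_succ, Finset.sum_div,
            Finset.sum_mul]
          simp only [Nat.add_sub_cancel]
          have hlast : 0 ≤ f k * g (k - k) := mul_nonneg (hf0 _) (hg0 _)
          refine le_trans (Finset.sum_le_sum fun i hi => ?_) (le_add_of_nonneg_right hlast)
          have hik := Finset.mem_range.1 hi
          rw [mb_hat_conv _ _ _ (by omega), add_comm 1 i]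
          have e1 : bell w (i + 1) = bell t (i + 1) := by
            refine bell_congr _ _ _ fun j hj1 hj2 => ?_
            simp only [ht]
            rw [if_pos (by omega)]
          have e2 : k + 1 - (i + 1) = k - i := by omega
          rw [e1, e2]
          refine mul_le_mul_of_nonneg_left ?_ (hf0 i)
          simp only [hg]
          rw [if_neg (by omega)]
          exact hh _
        have hcc := hc (k + 1)
        have hhh := mul_le_mul_of_nonneg_left (hh (k + 1)) hL.le
        have : u k = c (k + 1) / (k + 1).factorial * X ^ (k + 1) + (f k - v k) +
            L * (h (k + 1) / (k + 1).factorial * X ^ (k + 1)) +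
            (∑ l ∈ Finset.Icc 1 (k + 1 - 1),
            ((k + 1).choose l : ℝ) * bell w l * h (k + 1 - l)) / (k + 1).factorial
              * X ^ (k + 1) := by
          simp only [hu, hf, hv]
          rw [hw (k + 1) (by omega), hb, hcL]
          ring
        rw [this]
        nlinarith
      have hsum := Finset.sum_le_sum step
      rw [Finset.sum_add_distrib, Finset.sum_add_distrib, Finset.sum_sub_distrib, hvS,
        ← Finset.mul_sum] at hsum
      have hcv := conv_le f g hf0 hg0 (n + 1)
      have hge := mb_geom q hq.le hq2 (n + 1)
      have hLg := mul_le_mul_of_nonneg_left hge (show 0 ≤ L * (1 + γ) by positivity)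
      set F := ∑ j ∈ Finset.range (n + 1), f j with hF
      have hF0 : 0 ≤ F := Finset.sum_nonneg fun j _ => hf0 j
      have hexp := Real.abs_exp_sub_one_sub_id_le (x := S) (by rw [abs_of_nonneg hS0]; linarith)
      have hexp2 := (abs_le.1 hexp).2
      have hSS : S ^ 2 ≤ 1 / 16 := by nlinarith
      have hF1 : F ≤ 1 := by linarith
      have hFg : F * ∑ j ∈ Finset.range (n + 1), g j ≤ 1 / 16 := by
        calc _ ≤ 1 * (1 / 16 : ℝ) := mul_le_mul hF1 (hgs.trans h2)
              (Finset.sum_nonneg fun j _ => hg0 j) (by norm_num)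
          _ = _ := by norm_num
      linarith
  have hm := main n
  obtain ⟨m, rfl⟩ : ∃ m, n = m + 1 := ⟨n - 1, by omega⟩
  exact (Finset.single_le_sum (f := u) (fun j _ => hu0 j) (Finset.self_mem_range_succ m)).trans hm

/-- generating-function bound for the majorant recursion; the
constants `C` and `χ` depend only on `M`, `A` and `d₀` (not on `D`). -/
theorem majorant_recursion_bound (M A d₀ : ℝ) (hM : 0 < M) (hA : 0 < A) (hd₀ : 0 < d₀) :
    ∃ C > (0 : ℝ), ∃ χ > (0 : ℝ),
      ∀ (D : ℝ), 0 < D →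
      ∀ a c w : ℕ → ℝ,
        a 0 = 1 →
        (∀ k : ℕ, 1 ≤ k → a k = k.factorial * M * A * D ^ k) →
        (∀ k : ℕ, c k = d₀ * M * A ^ 2 * (k + 1).factorial * D ^ k) →
        w 1 = c 1 + 2 * c 0 * a 1 →
        (∀ k : ℕ, 2 ≤ k →
          w k = c k + bell (fun j => if j = k then 0 else w j) k +
            c 0 * ∑ l ∈ Finset.range (k + 1), (k.choose l : ℝ) * a l * a (k - l) +
            ∑ l ∈ Finset.Icc 1 (k - 1), (k.choose l : ℝ) * bell w l *
              ∑ m ∈ Finset.range (k - l + 1),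
                ((k - l).choose m : ℝ) * a m * a (k - l - m)) →
        ∀ k : ℕ, 1 ≤ k → w k ≤ C * k.factorial * D ^ k * χ ^ k := by
  set K := M * A with hK
  set L := d₀ * M * A ^ 2 with hL
  have hK0 : 0 < K := by positivity
  have hL0 : 0 < L := by positivity
  set γ := (1 + K) ^ 2 with hγ
  have hγ0 : 0 < γ := by positivity
  set x := 1 / (64 * ((L + 1) * (1 + γ))) with hx
  have hx0 : 0 < x := by positivity
  have hxe : x * ((L + 1) * (1 + γ)) = 1 / 64 := by
    rw [hx]; field_simp
  refine ⟨1 / 4, by norm_num, 1 / x, by positivity, ?_⟩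
  intro D hD a c w ha0 ha hc hw1 hw k hk
  have hxL : 0 < x * L := by positivity
  have hxγ : 0 < x * γ := by positivity
  have hxLγ : 0 < x * L * γ := by positivity
  have ha' : ∀ k : ℕ, 1 ≤ k → a k = k.factorial * K * D ^ k := by
    intro k hk; rw [ha k hk, hK]; ring
  have han : ∀ k, 0 ≤ a k := by
    intro k
    rcases Nat.eq_zero_or_pos k with rfl | h
    · rw [ha0]; norm_num
    · rw [ha' k h]; positivity
  have key := mb_main L γ (2 * x) (x / D) hL0 hγ0 (by positivity) (by nlinarith) (by positivity)
    (by nlinarith) (by nlinarith) c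
    (fun k => ∑ m ∈ Finset.range (k + 1), (k.choose m : ℝ) * a m * a (k - m)) w
    (fun k => by rw [hc k]; positivity)
    (fun k => Finset.sum_nonneg fun m _ => by
      have := han m; have := han (k - m); positivity)
    (by rw [hc 0]; simp)
    (fun k => by
      rw [hc k, Nat.factorial_succ, div_pow, mul_pow]
      have hk2 : ((k + 1 : ℕ) : ℝ) ≤ (2 ^ k : ℕ) := by
        exact_mod_cast Nat.lt_two_pow_self
      have hfac : (k.factorial : ℝ) ≠ 0 := by positivity
      calc _ = L * x ^ k * ((k + 1 : ℕ) : ℝ) := by push_cast; field_simp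
        _ ≤ L * x ^ k * (2 ^ k : ℕ) := by gcongr
        _ = _ := by push_cast; ring)
    (fun k => mb_h_bound K D x hK0 hD hx0 a ha0 ha' k)
    (fun k hk => by
      rcases Nat.lt_or_ge k 2 with h | h
      · obtain rfl : k = 1 := by omega
        have hb := bell_split (fun j => if j = 1 then 0 else w j) 1 le_rfl
        have hb2 : bell (fun j => if j = 1 then 0 else w j) 1 = 0 := by
          refine (Finset.sum_eq_zero fun P hP => ?_)
          have hne : P.Nonempty := by
            simp only [CF.setPartitions, Finset.mem_filter, Finset.mem_univ, true_and] at hP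
            obtain ⟨B, hB, _⟩ := hP.2.2 0
            exact ⟨B, hB⟩
          obtain ⟨B, hB⟩ := hne
          refine Finset.prod_eq_zero hB ?_
          have := setPart_mem hP B hB
          simp only [show B.card = 1 by omega, if_true]
        rw [hb2, hw1]
        simp [Finset.sum_range_succ, ha0]
        ring
      · exact hw k h) k hk
  have hfac : (0 : ℝ) < k.factorial := by positivity
  have hxk := pow_pos hx0 k
  have hDk := pow_pos hD k
  rw [div_pow, div_mul_div_comm, div_le_iff₀ (by positivity)] at key
  rw [one_div x, inv_pow, ← div_eq_mul_inv, le_div_iff₀ hxk]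
  linarith
end

section
/- (Theorem 3.1, expansion of the chemical potential.) Let d ≥ 1 and let (ρ^{(n)})_{n≥0} be symmetric measurable functions ρ^{(n)} : (ℝ^d)^n → [0,∞) with ρ^{(0)} = 1 which are translation invariant (ρ^{(n)}(x₁+a,…,x_n+a) = ρ^{(n)}(x₁,…,x_n) for all a) and satisfy a Ruelle bound ρ^{(n)} ≤ ξ^n for some ξ > 0; write ρ := ρ^{(1)} (a constant) and assume ρ > 0. Let ρ_T ∈ A₀ be the unique configuration functional with (ρ^{(n)})_{n≥0} = exp∗ ρ_T, and for x ∈ ℝ^d let ω_x ∈ A₀ be the unique functional with D_x ρ_T = ρ · exp∗ ω_x. Define the Janossy densities j_Λ^{(n)}(x₁,…,x_n) := Σ_{k=0}^∞ ((−1)^k/k!) ∫_{Λ^k} ρ^{(n+k)}(x₁,…,x_n,y₁,…,y_k) dy for bounded measurable Λ ⊆ ℝ^d. Let μ ∈ ℝ and assume (Assumption A, n = 1): for every bounded Δ ⊆ ℝ^d, sup_{x ∈ Δ} | j_{B_R}^{(1)}(x)/j_{B_R}^{(0)} − e^{μ} | → 0 as R → ∞, where B_R is the open ball of radius R centered at 0.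 Assume (Assumption B, m = 1): there are M, A, D_ρ > 0 such that for every bounded measurable Λ, every k ≥ 1 and every x ∈ ℝ^d, ∫_{Λ^k} |ρ_T^{(1+k)}(x,y₁,…,y_k)| dy ≤ k! · M · A · D_ρ^k · ρ. Then there exists D₀ > 0, depending only on M and A, such that if D_ρ ≤ D₀ then the series Σ_{k≥1} ((−1)^k/k!) ∫_{(ℝ^d)^k} ω_0^{(k)}(y₁,…,y_k) dy converges absolutely and μ = log ρ + Σ_{k=1}^∞ ((−1)^k/k!) ∫_{(ℝ^d)^k} ω_0^{(k)}(y₁,…,y_k) dy. -/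
open MeasureTheory Finset

/-- The Janossy densities
`j_Λ^{(n)}(x) = Σ_k ((−1)^k/k!) ∫_{Λ^k} ρ^{(n+k)}(x,y) dy`. -/
noncomputable def janossy (d : ℕ) (ρ : CF (Euc d)) (Λ : Set (Euc d)) (n : ℕ)
    (x : Fin n → Euc d) : ℝ :=
  ∑' k : ℕ, (-1 : ℝ) ^ k / k.factorial *
    ∫ y, ρ (n + k) (Fin.append x y) ∂(piRestrict d Λ k)
namespace CF
variable {E : Type}

theorem ev_eq (Φ : CF E) {n k : ℕ} (x : Fin n → E) (T : Finset (Fin n)) (f : Fin k → Fin n)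
    (hf : StrictMono f) (hT : Finset.univ.image f = T) :
    Φ T.card (sub x T) = Φ k (x ∘ f) := by
  have hc : T.card = k := by
    rw [← hT, Finset.card_image_of_injective _ hf.injective]; simp
  subst hc
  have := Finset.orderEmbOfFin_unique (s := T) rfl (f := f)
    (fun i => by rw [← hT]; exact Finset.mem_image_of_mem _ (Finset.mem_univ _)) hf
  rw [this]
  rfl

theorem ev_univ (Φ : CF E) {n : ℕ} (x : Fin n → E) :
    Φ (Finset.univ : Finset (Fin n)).card (sub x Finset.univ) = Φ n x :=
  ev_eq Φ x _ id strictMono_id (by simp)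

theorem ev_sub (Φ : CF E) {n : ℕ} (x : Fin n → E) (S : Finset (Fin n)) (K : Finset (Fin S.card)) :
    Φ K.card (sub (sub x S) K) =
      Φ (K.map (S.orderEmbOfFin rfl).toEmbedding).card
        (sub x (K.map (S.orderEmbOfFin rfl).toEmbedding)) := by
  symm
  refine ev_eq Φ x _ (fun i => S.orderEmbOfFin rfl (K.orderEmbOfFin rfl i)) ?_ ?_
  · intro a b h; simpa using h
  · ext a
    simp only [Finset.mem_image, Finset.mem_univ, true_and, Finset.mem_map]
    constructor
    · rintro ⟨i, rfl⟩; exact ⟨_, Finset.orderEmbOfFin_mem K rfl i, rfl⟩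
    · rintro ⟨b, hb, rfl⟩
      have : b ∈ Set.range (K.orderEmbOfFin rfl) := by simpa using hb
      obtain ⟨i, rfl⟩ := this
      exact ⟨i, rfl⟩

theorem map_univ_emb {n : ℕ} (S : Finset (Fin n)) :
    (Finset.univ : Finset (Fin S.card)).map (S.orderEmbOfFin rfl).toEmbedding = S := by
  apply Finset.coe_injective; simp

theorem conv_ev (Φ Θ : CF E) {n : ℕ} (x : Fin n → E) (S : Finset (Fin n)) :
    conv Φ Θ S.card (sub x S) =
      ∑ J ∈ S.powerset, Φ J.card (sub x J) * Θ (S \ J).card (sub x (S \ J)) := by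
  unfold conv
  rw [← Finset.powerset_univ]
  refine Finset.sum_bij (fun K _ => K.map (S.orderEmbOfFin rfl).toEmbedding) ?_ ?_ ?_ ?_
  · intro K _
    rw [Finset.mem_powerset]
    conv_rhs => rw [← map_univ_emb S]
    exact Finset.map_subset_map.2 (Finset.subset_univ _)
  · intro a _ b _ h; exact Finset.map_injective _ h
  · intro J hJ
    rw [Finset.mem_powerset, ← map_univ_emb S, Finset.subset_map_iff] at hJ
    obtain ⟨u, _, rfl⟩ := hJ
    exact ⟨u, by simp, rfl⟩
  · intro K _
    have h : S \ K.map (S.orderEmbOfFin rfl).toEmbedding =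
        (Kᶜ).map (S.orderEmbOfFin rfl).toEmbedding := by
      rw [Finset.compl_eq_univ_sdiff, Finset.map_sdiff, map_univ_emb]
    rw [h, ev_sub Φ, ev_sub Θ]

theorem conv_left_comm (Ψ Φ Θ : CF E) : conv Ψ (conv Φ Θ) = conv Φ (conv Ψ Θ) := by
  funext n x
  have key : ∀ Ψ Φ : CF E, conv Ψ (conv Φ Θ) n x = ∑ I : Finset (Fin n), ∑ J : Finset (Fin n),
      if Disjoint I J then Ψ I.card (sub x I) * (Φ J.card (sub x J) *
        Θ ((I ∪ J)ᶜ).card (sub x (I ∪ J)ᶜ)) else 0 := by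
    intro Ψ Φ
    conv_lhs => unfold conv
    refine Finset.sum_congr rfl fun I _ => ?_
    rw [← Finset.sum_filter]
    have := conv_ev Φ Θ x Iᶜ
    unfold conv at this
    rw [this, Finset.mul_sum]
    refine Finset.sum_congr ?_ ?_
    · ext J
      simp only [Finset.mem_powerset, Finset.mem_filter, Finset.mem_univ, true_and]
      rw [Finset.subset_compl_iff_disjoint_left]
    · intro J _
      have : Iᶜ \ J = (I ∪ J)ᶜ := by ext; simp
      rw [this]
  rw [key, key, Finset.sum_comm]
  refine Finset.sum_congr rfl fun I _ => Finset.sum_congr rfl fun J _ => ?_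
  rw [Finset.union_comm]
  simp only [disjoint_comm (a := J) (b := I)]
  split_ifs <;> ring

theorem conv_smul (c : ℝ) (Ψ Φ : CF E) : conv Ψ (c • Φ) = c • conv Ψ Φ := by
  funext n x
  simp only [conv, Pi.smul_apply, smul_eq_mul, Finset.mul_sum]
  exact Finset.sum_congr rfl fun I _ => by ring

theorem conv_add (Ψ Φ Φ' : CF E) : conv Ψ (Φ + Φ') = conv Ψ Φ + conv Ψ Φ' := by
  funext n x
  simp only [conv, Pi.add_apply, mul_add, Finset.sum_add_distrib]

/-- truncated exponential -/
noncomputable def expT (Φ : CF E) (K : ℕ) : CF E :=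
  ∑ m ∈ Finset.range K, ((m.factorial : ℝ))⁻¹ • starPow Φ m

theorem expT_apply (Φ : CF E) (K n : ℕ) (x : Fin n → E) :
    expT Φ K n x = ∑ m ∈ Finset.range K, ((m.factorial : ℝ))⁻¹ * starPow Φ m n x := by
  simp [expT, Finset.sum_apply]

theorem expT_succ (Φ : CF E) (K : ℕ) :
    expT Φ (K+1) = expT Φ K + ((K.factorial : ℝ))⁻¹ • starPow Φ K := by
  simp [expT, Finset.sum_range_succ]

theorem starPow_eq_zero (Φ : CF E) (h0 : Φ 0 = 0) (m : ℕ) : ∀ n, n < m → ∀ x, starPow Φ m n x = 0 := by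
  induction m with
  | zero => intro n hn; omega
  | succ m ih =>
    intro n hn x
    show conv Φ (starPow Φ m) n x = 0
    refine Finset.sum_eq_zero fun I _ => ?_
    by_cases hI : I.card = 0
    · have : ∀ (k : ℕ) (y : Fin k → E), k = 0 → Φ k y = 0 := by
        rintro k y rfl; rw [h0]; rfl
      rw [this _ _ hI, zero_mul]
    · rw [ih _ _ _, mul_zero]
      have := Finset.card_add_card_compl I
      simp only [Fintype.card_fin] at this
      omega

theorem expT_eq (Φ : CF E) (h0 : Φ 0 = 0) (K n : ℕ) (hn : n < K) (x : Fin n → E) :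
    expT Φ K n x = starExp Φ n x := by
  rw [expT_apply, starExp]
  symm
  apply Finset.sum_subset
  · intro a; simp; omega
  · intro m _ hm
    rw [starPow_eq_zero Φ h0 m n (by simp at hm; omega), mul_zero]

theorem conv_expT (Ψ Φ : CF E) (h0 : Φ 0 = 0) (K n : ℕ) (hn : n < K) (x : Fin n → E) :
    conv Ψ (expT Φ K) n x = conv Ψ (starExp Φ) n x := by
  refine Finset.sum_congr rfl fun I _ => ?_
  rw [expT_eq Φ h0 K _ _]
  have := Finset.card_le_univ Iᶜ
  simp only [Fintype.card_fin] at this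
  omega

theorem conv_unit (Ψ : CF E) : conv Ψ unit = Ψ := by
  funext n x
  unfold conv
  rw [Finset.sum_eq_single Finset.univ]
  · rw [ev_univ Ψ]; simp [unit]
  · intro I _ hI
    have : Iᶜ.card ≠ 0 := by simpa using hI
    simp only [unit, if_neg this, mul_zero]
  · simp

theorem deriv_starPow (δ : CF E →ₗ[ℝ] CF E) (hδ : ∀ Ψ Φ, δ (conv Ψ Φ) = conv (δ Ψ) Φ + conv Ψ (δ Φ))
    (Φ : CF E) (m : ℕ) :
    δ (starPow Φ (m+1)) = ((m:ℝ)+1) • conv (δ Φ) (starPow Φ m) := by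
  induction m with
  | zero =>
    show δ (conv Φ unit) = _
    simp [starPow, conv_unit]
  | succ m ih =>
    show δ (conv Φ (starPow Φ (m+1))) = _
    rw [hδ, ih, conv_smul, conv_left_comm]
    show conv (δ Φ) (starPow Φ (m+1)) + ((m:ℝ)+1) • conv (δ Φ) (starPow Φ (m+1)) = _
    push_cast
    module

theorem conv_zero (Ψ : CF E) : conv Ψ 0 = 0 := by
  funext n x; simp [conv]

theorem deriv_expT (δ : CF E →ₗ[ℝ] CF E) (hδ : ∀ Ψ Φ, δ (conv Ψ Φ) = conv (δ Ψ) Φ + conv Ψ (δ Φ))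
    (hu : δ unit = 0) (Φ : CF E) (K : ℕ) :
    δ (expT Φ (K+1)) = conv (δ Φ) (expT Φ K) := by
  induction K with
  | zero => simp [expT, starPow, hu, conv_zero]
  | succ K ih =>
    rw [expT_succ, map_add, ih, expT_succ, conv_add, conv_smul, map_smul, deriv_starPow δ hδ,
      smul_smul]
    congr 2
    rw [Nat.factorial_succ]; push_cast; field_simp

/-- number operator -/
noncomputable def numOp : CF E →ₗ[ℝ] CF E where
  toFun Φ := fun n x => n * Φ n x
  map_add' _ _ := by funext n x; simp [mul_add]
  map_smul' _ _ := by funext n x; simp; ring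

theorem numOp_conv (Ψ Φ : CF E) : numOp (conv Ψ Φ) = conv (numOp Ψ) Φ + conv Ψ (numOp Φ) := by
  funext n x
  simp only [numOp, conv, LinearMap.coe_mk, AddHom.coe_mk, Pi.add_apply, Finset.mul_sum]
  rw [← Finset.sum_add_distrib]
  refine Finset.sum_congr rfl fun I _ => ?_
  have := Finset.card_add_card_compl I
  simp only [Fintype.card_fin] at this
  have h : (n:ℝ) = (I.card:ℝ) + (Iᶜ.card : ℝ) := by exact_mod_cast this.symm
  rw [h]; ring

theorem numOp_starExp (Φ : CF E) (h0 : Φ 0 = 0) (n : ℕ) (x : Fin n → E) :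
    n * starExp Φ n x = conv (numOp Φ) (starExp Φ) n x := by
  have := deriv_expT numOp numOp_conv (by funext n x; simp [numOp, unit]) Φ (n+1)
  have := congrFun (congrFun this n) x
  rw [← conv_expT _ _ h0 (n+1) _ (by omega), ← this]
  show _ = n * expT Φ (n+1+1) n x
  rw [expT_eq Φ h0 _ _ (by omega)]

/-- derivative as linear map -/
noncomputable def DL (a : E) : CF E →ₗ[ℝ] CF E where
  toFun Φ := D a Φ
  map_add' _ _ := by funext n x; simp [D]
  map_smul' _ _ := by funext n x; simp [D]

theorem ev_D (a : E) (Φ : CF E) {n : ℕ} (y : Fin n → E) (I : Finset (Fin n)) :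
    D a Φ I.card (sub y I) = Φ (insert 0 (I.map (Fin.succEmb n))).card
      (sub (Fin.cons a y : Fin (n+1) → E) (insert 0 (I.map (Fin.succEmb n)))) := by
  symm
  have := ev_eq Φ (Fin.cons a y : Fin (n+1) → E) (insert 0 (I.map (Fin.succEmb n)))
    (Fin.cons 0 (fun i => (I.orderEmbOfFin rfl i).succ)) ?_ ?_
  · rw [this]
    unfold D
    congr 1
    funext i
    refine Fin.cases ?_ (fun i => ?_) i <;> simp [sub] 
  · intro i j
    refine Fin.cases ?_ (fun i => ?_) i <;> refine Fin.cases ?_ (fun j => ?_) j <;> simp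
  · ext b
    simp only [Finset.mem_image, Finset.mem_univ, true_and, Fin.exists_fin_succ, Fin.cons_zero, Fin.cons_succ,
      Finset.mem_insert, Finset.mem_map]
    constructor
    · rintro (h | ⟨i, rfl⟩)
      · exact Or.inl h.symm
      · exact Or.inr ⟨_, Finset.orderEmbOfFin_mem I rfl i, rfl⟩
    · rintro (h | ⟨c, hc, rfl⟩)
      · exact Or.inl h.symm
      · have : c ∈ Set.range (I.orderEmbOfFin rfl) := by simpa using hc
        obtain ⟨i, rfl⟩ := this
        exact Or.inr ⟨i, rfl⟩

theorem ev_S (a : E) (Φ : CF E) {n : ℕ} (y : Fin n → E) (I : Finset (Fin n)) :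
    Φ I.card (sub y I) = Φ (I.map (Fin.succEmb n)).card
      (sub (Fin.cons a y : Fin (n+1) → E) (I.map (Fin.succEmb n))) := by
  symm
  have := ev_eq Φ (Fin.cons a y : Fin (n+1) → E) (I.map (Fin.succEmb n))
    (fun i => (I.orderEmbOfFin rfl i).succ) ?_ ?_
  · rw [this]
    rfl
  · intro i j h; simpa using h
  · ext b
    simp only [Finset.mem_image, Finset.mem_univ, true_and, Finset.mem_map]
    constructor
    · rintro ⟨i, rfl⟩
      exact ⟨_, Finset.orderEmbOfFin_mem I rfl i, rfl⟩
    · rintro ⟨c, hc, rfl⟩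
      have : c ∈ Set.range (I.orderEmbOfFin rfl) := by simpa using hc
      obtain ⟨i, rfl⟩ := this
      exact ⟨i, rfl⟩

theorem sum_fin_succ_finset (n : ℕ) (f : Finset (Fin (n+1)) → ℝ) :
    ∑ I, f I = ∑ I : Finset (Fin n), f (insert 0 (I.map (Fin.succEmb n))) +
      ∑ I : Finset (Fin n), f (I.map (Fin.succEmb n)) := by
  rw [← Finset.powerset_univ]
  have h : (Finset.univ : Finset (Fin (n+1))) = insert 0 (Finset.univ.map (Fin.succEmb n)) := by
    rw [Fin.univ_succ, Finset.cons_eq_insert]; rfl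
  have hp : (Finset.univ.map (Fin.succEmb n)).powerset =
      (Finset.univ : Finset (Finset (Fin n))).map (Finset.mapEmbedding (Fin.succEmb n)).toEmbedding := by
    ext J
    simp only [Finset.mem_powerset, Finset.subset_map_iff, Finset.mem_map, Finset.mem_univ, true_and]
    constructor
    · rintro ⟨u, _, rfl⟩; exact ⟨u, rfl⟩
    · rintro ⟨u, rfl⟩; exact ⟨u, Finset.subset_univ _, rfl⟩
  rw [h, Finset.sum_powerset_insert (by simp), hp, Finset.sum_map, Finset.sum_map, add_comm]
  simp

theorem DL_conv (a : E) (Ψ Φ : CF E) : DL a (conv Ψ Φ) = conv (DL a Ψ) Φ + conv Ψ (DL a Φ) := by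
  funext n y
  show conv Ψ Φ (n+1) (Fin.cons a y) = conv (D a Ψ) Φ n y + conv Ψ (D a Φ) n y
  conv_lhs => unfold conv
  rw [sum_fin_succ_finset]
  congr 1
  · refine Finset.sum_congr rfl fun I _ => ?_
    have : (insert 0 (I.map (Fin.succEmb n)))ᶜ = Iᶜ.map (Fin.succEmb n) := by
      ext b; refine Fin.cases ?_ (fun i => ?_) b <;> simp
    rw [this, ev_D, ← ev_S a Φ]
  · refine Finset.sum_congr rfl fun I _ => ?_
    have : (I.map (Fin.succEmb n))ᶜ = insert 0 (Iᶜ.map (Fin.succEmb n)) := by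
      ext b; refine Fin.cases ?_ (fun i => ?_) b <;> simp
    rw [this, ev_D, ← ev_S a Ψ]

theorem D_starExp (a : E) (Φ : CF E) (h0 : Φ 0 = 0) :
    D a (starExp Φ) = conv (D a Φ) (starExp Φ) := by
  funext n y
  have := deriv_expT (DL a) (DL_conv a) (by funext n x; simp [DL, D, unit]) Φ (n+1)
  have := congrFun (congrFun this n) y
  rw [conv_expT _ _ h0 _ _ (by omega)] at this
  have h2 : DL a (expT Φ (n+1+1)) n y = expT Φ (n+1+1) (n+1) (Fin.cons a y) := rfl
  rw [h2, expT_eq Φ h0 _ _ (by omega)] at this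
  exact this

theorem recur (Φ : CF E) (h0 : Φ 0 = 0) (n : ℕ) (x : Fin n → E) :
    n * Φ n x = n * starExp Φ n x - ∑ I ∈ Finset.univ.erase (Finset.univ : Finset (Fin n)),
      I.card * Φ I.card (sub x I) * starExp Φ Iᶜ.card (sub x Iᶜ) := by
  rw [numOp_starExp Φ h0]
  unfold conv
  rw [← Finset.add_sum_erase _ _ (Finset.mem_univ Finset.univ), ev_univ (numOp Φ)]
  have : ∀ x : Fin (Finset.univ : Finset (Fin n))ᶜ.card → E, starExp Φ _ x = 1 := by
    have : ∀ k, k = 0 → ∀ x : Fin k → E, starExp Φ k x = 1 := by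
      rintro k rfl x; simp [starExp, starPow, unit]
    exact this _ (by simp)
  rw [this]
  simp [numOp]

end CF
namespace CF
variable {E : Type}

theorem recur_ind (P : ∀ n : ℕ, ((Fin n → E) → ℝ) → Prop)
    (hsum : ∀ n (s : Finset (Finset (Fin n))) (f : Finset (Fin n) → (Fin n → E) → ℝ),
      (∀ I ∈ s, P n (f I)) → P n (fun x => ∑ I ∈ s, f I x))
    (hsub : ∀ n f g, P n f → P n g → P n (fun x => f x - g x))
    (hsmul : ∀ n (c : ℝ) f, P n f → P n (fun x => c * f x))
    (hmul : ∀ n (I : Finset (Fin n)) f g, P I.card f → P Iᶜ.card g →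
      P n (fun x => f (sub x I) * g (sub x Iᶜ)))
    (Φ : CF E) (h0 : Φ 0 = 0) (hP0 : P 0 0) (hE : ∀ n, P n (starExp Φ n)) (n : ℕ) : P n (Φ n) := by
  induction n using Nat.strong_induction_on with
  | _ n ih =>
    rcases Nat.eq_zero_or_pos n with rfl | hn
    · rw [h0]; exact hP0
    have : Φ n = fun x => (n:ℝ)⁻¹ * (n * starExp Φ n x - ∑ I ∈ Finset.univ.erase (Finset.univ : Finset (Fin n)),
      (I.card : ℝ) * (Φ I.card (sub x I) * starExp Φ Iᶜ.card (sub x Iᶜ))) := by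
      funext x
      have h := recur Φ h0 n x
      simp only [mul_assoc] at h
      rw [← h]
      have : (n:ℝ) ≠ 0 := by positivity
      field_simp
    rw [this]
    refine hsmul _ _ _ (hsub _ _ _ (hsmul _ _ _ (hE n)) (hsum _ _ _ fun I hI => hsmul _ _ _ (hmul _ _ _ _ (ih _ ?_) (hE _))))
    have h1 : I ≠ Finset.univ := (Finset.mem_erase.1 hI).1
    have := Finset.card_lt_univ_of_notMem (s := I) (x := (not_forall.1 (fun h => h1 (Finset.eq_univ_iff_forall.2 h))).choose)
      (not_forall.1 (fun h => h1 (Finset.eq_univ_iff_forall.2 h))).choose_spec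
    simpa using this

variable [MeasurableSpace E]

theorem measurable_sub {n : ℕ} (I : Finset (Fin n)) : Measurable (fun x : Fin n → E => sub x I) := by
  unfold sub; fun_prop

theorem measurable_of_starExp (Φ : CF E) (h0 : Φ 0 = 0) (hE : ∀ n, Measurable (starExp Φ n)) (n : ℕ) :
    Measurable (Φ n) := by
  refine recur_ind (fun n f => Measurable f) ?_ ?_ ?_ ?_ Φ h0 measurable_const hE n
  · intro n s f h; exact Finset.measurable_fun_sum s h
  · intro n f g hf hg; exact hf.sub hg
  · intro n c f hf; exact hf.const_mul c
  · intro n I f g hf hg; exact (hf.comp (measurable_sub I)).mul (hg.comp (measurable_sub Iᶜ))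

variable (ν : Measure E) [SigmaFinite ν]

theorem mp_sub {n : ℕ} (I : Finset (Fin n)) :
    MeasurePreserving (fun x : Fin n → E => (sub x I, sub x Iᶜ)) (Measure.pi fun _ => ν)
      ((Measure.pi fun _ => ν).prod (Measure.pi fun _ => ν)) := by
  have h1 := (measurePreserving_piCongrLeft (fun _ : Fin n => ν)
    (finSumEquivOfFinset (s := I) rfl rfl)).symm
  have h2 := measurePreserving_sumPiEquivProdPi (X := fun _ : Fin I.card ⊕ Fin Iᶜ.card => E) (fun _ => ν)
  exact h2.comp h1

theorem integrable_ev {n : ℕ} (I : Finset (Fin n)) (f : (Fin I.card → E) → ℝ) (g : (Fin Iᶜ.card → E) → ℝ)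
    (hf : Integrable f (Measure.pi fun _ => ν)) (hg : Integrable g (Measure.pi fun _ => ν)) :
    Integrable (fun x : Fin n → E => f (sub x I) * g (sub x Iᶜ)) (Measure.pi fun _ => ν) := by
  have := hf.mul_prod hg
  rw [← (mp_sub ν I).map_eq] at this
  exact this.comp_aemeasurable (mp_sub ν I).aemeasurable

theorem integral_ev {n : ℕ} (I : Finset (Fin n)) (f : (Fin I.card → E) → ℝ) (g : (Fin Iᶜ.card → E) → ℝ)
    (hf : Integrable f (Measure.pi fun _ => ν)) (hg : Integrable g (Measure.pi fun _ => ν)) :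
    ∫ x : Fin n → E, f (sub x I) * g (sub x Iᶜ) ∂(Measure.pi fun _ => ν) =
      (∫ x, f x ∂(Measure.pi fun _ => ν)) * ∫ x, g x ∂(Measure.pi fun _ => ν) := by
  have := hf.mul_prod hg
  rw [← integral_prod_mul]
  rw [← (mp_sub ν I).map_eq] at this ⊢
  rw [integral_map (mp_sub ν I).aemeasurable this.1]

/-- integrability of all components -/
def Intg (Φ : CF E) : Prop := ∀ n, Integrable (Φ n) (Measure.pi fun _ => ν)

/-- coefficients -/
noncomputable def cf (Φ : CF E) (n : ℕ) : ℝ := ((n.factorial : ℝ))⁻¹ * ∫ x, Φ n x ∂(Measure.pi fun _ => ν)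

variable {ν}

theorem Intg.conv {Φ Ψ : CF E} (hΦ : Intg ν Φ) (hΨ : Intg ν Ψ) : Intg ν (conv Φ Ψ) := by
  intro n
  exact integrable_finsetSum _ fun I _ => integrable_ev ν I _ _ (hΦ _) (hΨ _)

theorem cf_conv {Φ Ψ : CF E} (hΦ : Intg ν Φ) (hΨ : Intg ν Ψ) (n : ℕ) :
    cf ν (conv Φ Ψ) n = ∑ p ∈ Finset.HasAntidiagonal.antidiagonal n, cf ν Φ p.1 * cf ν Ψ p.2 := by
  unfold cf CF.conv
  rw [integral_finsetSum _ fun I _ => integrable_ev ν I _ _ (hΦ _) (hΨ _)]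
  have h1 : ∀ I : Finset (Fin n), ∫ x : Fin n → E, Φ I.card (sub x I) * Ψ Iᶜ.card (sub x Iᶜ) ∂(Measure.pi fun _ => ν)
      = (fun k => (∫ x, Φ k x ∂(Measure.pi fun _ => ν)) * ∫ x, Ψ (n - k) x ∂(Measure.pi fun _ => ν)) I.card := by
    intro I
    rw [integral_ev ν I _ _ (hΦ _) (hΨ _)]
    have : Iᶜ.card = n - I.card := by rw [Finset.card_compl]; simp
    have h2 : ∀ k l, k = l → ∫ x, Ψ k x ∂(Measure.pi fun _ => ν) = ∫ x, Ψ l x ∂(Measure.pi fun _ => ν) := by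
      rintro k l rfl; rfl
    rw [h2 _ _ this]
  simp only [h1]
  rw [← Finset.powerset_univ, Finset.sum_powerset_apply_card (fun k => (∫ x, Φ k x ∂(Measure.pi fun _ => ν)) * ∫ x, Ψ (n - k) x ∂(Measure.pi fun _ => ν))]
  simp only [Finset.card_univ, Fintype.card_fin]
  rw [Finset.Nat.sum_antidiagonal_eq_sum_range_succ_mk, Finset.mul_sum]
  refine Finset.sum_congr rfl fun k hk => ?_
  have hk : k ≤ n := by simpa [Nat.lt_succ_iff] using hk
  rw [nsmul_eq_mul, Nat.cast_choose ℝ hk]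
  have := Nat.factorial_ne_zero n
  field_simp

theorem Intg.of_starExp (Φ : CF E) (h0 : Φ 0 = 0) (hE : Intg ν (starExp Φ)) : Intg ν Φ := by
  intro n
  refine recur_ind (fun n f => Integrable f (Measure.pi fun _ : Fin n => ν)) ?_ ?_ ?_ ?_ Φ h0 (integrable_zero _ _ _) hE n
  · intro n s f h; exact integrable_finsetSum s h
  · intro n f g hf hg; exact hf.sub hg
  · intro n c f hf; exact hf.const_mul c
  · intro n I f g hf hg; exact integrable_ev ν I f g hf hg

theorem real_bound (C D : ℝ) (hC : 0 ≤ C) (hD : 0 ≤ D) (u : ℕ → ℝ)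
    (hu : ∀ n, u n ≤ n * (C * D^n) + ∑ i ∈ Finset.range n, u i * (C * D^(n-i))) (hu0 : u 0 = 0) (n : ℕ) :
    u n ≤ (D * (1 + 2*C))^n := by
  induction n using Nat.strong_induction_on with
  | _ n ih =>
    rcases Nat.eq_zero_or_pos n with rfl | hn
    · simp [hu0]
    have h1 : ∑ i ∈ Finset.range n, u i * (C * D^(n-i)) ≤ ∑ i ∈ Finset.range n, C * D^n * (1+2*C)^i := by
      refine Finset.sum_le_sum fun i hi => ?_
      have hi := Finset.mem_range.1 hi
      calc u i * (C * D^(n-i)) ≤ (D * (1 + 2*C))^i * (C * D^(n-i)) := by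
            gcongr; exact ih i hi
        _ = C * (D^i * D^(n-i)) * (1+2*C)^i := by rw [mul_pow]; ring
        _ = _ := by rw [← pow_add]; congr 4; omega
    have h2 : 2 * ∑ i ∈ Finset.range n, C * D^n * (1+2*C)^i = D^n * ((1+2*C)^n - 1) := by
      rw [← Finset.mul_sum]
      have := geom_sum_mul (1+2*C) n
      linear_combination D^n * this
    have h3 : 1 + (n:ℝ) * (2*C) ≤ (1 + 2*C)^n := one_add_mul_le_pow (by linarith) n
    have := hu n
    have h4 : D^n * (1 + (n:ℝ) * (2*C)) ≤ D^n * (1 + 2*C)^n := by gcongr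
    have h5 : 0 ≤ D^n := by positivity
    rw [mul_pow]
    linarith

theorem omega_bound (Φ : CF E) (h0 : Φ 0 = 0) (hE : Intg ν (starExp Φ)) (C D : ℝ) (hC : 0 ≤ C) (hD : 0 ≤ D)
    (hb : ∀ k, 1 ≤ k → cf ν (fun n x => |starExp Φ n x|) k ≤ C * D^k) (n : ℕ) :
    cf ν (fun n x => |Φ n x|) n ≤ (D * (1 + 2*C))^n := by
  have hI := Intg.of_starExp Φ h0 hE
  set F : CF E := fun n x => n * |Φ n x| with hF
  set G : CF E := fun n x => if n = 0 then 0 else |starExp Φ n x| with hG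
  have hFI : Intg ν F := fun n => (hI n).abs.const_mul _
  have hGI : Intg ν G := by
    intro n
    by_cases h : n = 0
    · subst h; simp [hG]
    · simp only [hG, if_neg h]; exact (hE n).abs
  have cF : ∀ k, cf ν F k = k * cf ν (fun n x => |Φ n x|) k := by
    intro k; simp only [cf, hF]; rw [integral_const_mul]; ring
  have cnn : ∀ k, 0 ≤ cf ν (fun n x => |Φ n x|) k := by
    intro k; unfold cf
    exact mul_nonneg (by positivity) (integral_nonneg fun x => abs_nonneg _)
  have pt : ∀ n x, F n x ≤ n * |starExp Φ n x| + conv F G n x := by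
    intro n x
    have h := recur Φ h0 n x
    have h2 : conv F G n x = ∑ I ∈ Finset.univ.erase (Finset.univ : Finset (Fin n)),
      |I.card * Φ I.card (sub x I) * starExp Φ Iᶜ.card (sub x Iᶜ)| := by
      unfold conv
      rw [← Finset.add_sum_erase _ _ (Finset.mem_univ Finset.univ)]
      have : G (Finset.univ : Finset (Fin n))ᶜ.card (sub x Finset.univᶜ) = 0 := by simp [hG]
      rw [this, mul_zero, zero_add]
      refine Finset.sum_congr rfl fun I hI => ?_
      have h1 : Iᶜ.card ≠ 0 := by simpa using (Finset.mem_erase.1 hI).1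
      simp only [hF, hG, if_neg h1, abs_mul, Nat.abs_cast]
    rw [h2]
    calc F n x = |(n:ℝ) * Φ n x| := by simp [hF, abs_mul]
      _ ≤ |(n:ℝ) * starExp Φ n x| + |∑ I ∈ Finset.univ.erase (Finset.univ : Finset (Fin n)),
          I.card * Φ I.card (sub x I) * starExp Φ Iᶜ.card (sub x Iᶜ)| := by rw [h]; exact abs_sub _ _
      _ ≤ _ := by
        rw [abs_mul, Nat.abs_cast]
        gcongr
        exact Finset.abs_sum_le_sum_abs _ _
  have key : ∀ n : ℕ, (n:ℝ) * cf ν (fun n x => |Φ n x|) n ≤ n * (C * D^n) +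
      ∑ i ∈ Finset.range n, ((i:ℝ) * cf ν (fun n x => |Φ n x|) i) * (C * D^(n-i)) := by
    intro n
    rcases Nat.eq_zero_or_pos n with rfl | hn
    · simp
    have h1 : cf ν F n ≤ n * cf ν (fun n x => |starExp Φ n x|) n + cf ν (conv F G) n := by
      unfold cf
      have hh : (n:ℝ) * ∫ x, |starExp Φ n x| ∂(Measure.pi fun _ => ν) =
        ∫ x, n * |starExp Φ n x| ∂(Measure.pi fun _ => ν) := (integral_const_mul _ _).symm
      rw [mul_left_comm, ← mul_add, hh,
        ← integral_add ((hE n).abs.const_mul _) (hFI.conv hGI n)]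
      gcongr
      · exact hFI n
      · exact ((hE n).abs.const_mul _).add (hFI.conv hGI n)
      · exact fun x => pt n x
    rw [cF, cf_conv hFI hGI, Finset.Nat.sum_antidiagonal_eq_sum_range_succ_mk, Finset.sum_range_succ] at h1
    have hG0 : cf ν G 0 = 0 := by simp [cf, hG]
    simp only [Nat.sub_self, hG0, mul_zero, add_zero] at h1
    refine h1.trans ?_
    refine add_le_add (mul_le_mul_of_nonneg_left (hb n hn) (by positivity)) (Finset.sum_le_sum fun i hi => ?_)
    · rw [cF]
      have hi := Finset.mem_range.1 hi
      have : cf ν G (n-i) ≤ C * D^(n-i) := by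
        have := hb (n-i) (by omega)
        have hne : n - i ≠ 0 := by omega
        simpa only [cf, hG, if_neg hne] using this
      have := cnn i
      gcongr
  have := real_bound C D hC hD _ key (by simp) n
  rcases Nat.eq_zero_or_pos n with rfl | hn
  · simp [cf, h0]
  · refine le_trans ?_ this
    have h1 : (1:ℝ) ≤ n := by exact_mod_cast hn
    nlinarith [cnn n]

end CF
set_option linter.unusedSectionVars false
namespace CF
variable {E : Type} [MeasurableSpace E] {ν : Measure E} [SigmaFinite ν]

theorem Intg_unit : Intg ν (unit : CF E) := by
  intro n
  rcases Nat.eq_zero_or_pos n with rfl | hn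
  · have : (unit : CF E) 0 = fun _ => 1 := by funext x; simp [unit]
    rw [this, Measure.pi_of_empty]
    exact integrable_const _
  · have : (unit : CF E) n = 0 := by funext x; simp [unit, hn.ne']
    rw [this]; exact integrable_zero _ _ _

theorem cf_unit (n : ℕ) : cf ν (unit : CF E) n = if n = 0 then 1 else 0 := by
  rcases Nat.eq_zero_or_pos n with rfl | hn
  · simp only [cf, unit, if_true]
    rw [Measure.pi_of_empty]; simp
  · simp [cf, unit, hn.ne']

theorem Intg.starPow {Φ : CF E} (h : Intg ν Φ) (m : ℕ) : Intg ν (starPow Φ m) := by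
  induction m with
  | zero => exact Intg_unit
  | succ m ih => exact h.conv ih

theorem cauchy {Φ Ψ : CF E} (hΦ : Intg ν Φ) (hΨ : Intg ν Ψ)
    (sΦ : Summable fun n => ‖(-1:ℝ)^n * cf ν Φ n‖) (sΨ : Summable fun n => ‖(-1:ℝ)^n * cf ν Ψ n‖) :
    Summable (fun n => ‖(-1:ℝ)^n * cf ν (conv Φ Ψ) n‖) ∧
    (∑' n, (-1:ℝ)^n * cf ν (conv Φ Ψ) n) = (∑' n, (-1:ℝ)^n * cf ν Φ n) * (∑' n, (-1:ℝ)^n * cf ν Ψ n) ∧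
    (∑' n, ‖(-1:ℝ)^n * cf ν (conv Φ Ψ) n‖) ≤ (∑' n, ‖(-1:ℝ)^n * cf ν Φ n‖) * (∑' n, ‖(-1:ℝ)^n * cf ν Ψ n‖) := by
  have e : ∀ n, (-1:ℝ)^n * cf ν (conv Φ Ψ) n = ∑ p ∈ Finset.HasAntidiagonal.antidiagonal n,
      ((-1:ℝ)^p.1 * cf ν Φ p.1) * ((-1:ℝ)^p.2 * cf ν Ψ p.2) := by
    intro n
    rw [cf_conv hΦ hΨ, Finset.mul_sum]
    refine Finset.sum_congr rfl fun p hp => ?_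
    rw [← Finset.HasAntidiagonal.mem_antidiagonal.1 hp, pow_add]; ring
  have h1 := summable_norm_sum_mul_antidiagonal_of_summable_norm sΦ sΨ
  have h2 := tsum_mul_tsum_eq_tsum_sum_antidiagonal_of_summable_norm sΦ sΨ
  have h3 := tsum_mul_tsum_eq_tsum_sum_antidiagonal_of_summable_norm sΦ.norm sΨ.norm
  have h4 := summable_norm_sum_mul_antidiagonal_of_summable_norm sΦ.norm sΨ.norm
  simp only [e]
  refine ⟨h1, h2.symm, ?_⟩
  rw [h3]
  refine h1.tsum_le_tsum (fun n => ?_) h4.of_norm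
  refine (norm_sum_le _ _).trans (Finset.sum_le_sum fun p _ => (norm_mul_le _ _))

theorem pow_sum {Φ : CF E} (hΦ : Intg ν Φ) (sΦ : Summable fun n => ‖(-1:ℝ)^n * cf ν Φ n‖) (m : ℕ) :
    Summable (fun n => ‖(-1:ℝ)^n * cf ν (starPow Φ m) n‖) ∧
    (∑' n, (-1:ℝ)^n * cf ν (starPow Φ m) n) = (∑' n, (-1:ℝ)^n * cf ν Φ n)^m ∧
    (∑' n, ‖(-1:ℝ)^n * cf ν (starPow Φ m) n‖) ≤ (∑' n, ‖(-1:ℝ)^n * cf ν Φ n‖)^m := by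
  induction m with
  | zero =>
    have e : ∀ n, (-1:ℝ)^n * cf ν (starPow Φ 0) n = if n = 0 then 1 else 0 := by
      intro n
      show (-1:ℝ)^n * cf ν unit n = _
      rw [cf_unit]; split_ifs with h <;> simp [h]
    simp only [e]
    refine ⟨?_, ?_, ?_⟩
    · apply summable_of_ne_finset_zero (s := {0}); intro b hb; simp at hb; simp [hb]
    · simp
    · rw [tsum_eq_single 0 (by intro b hb; simp [hb])]; simp
  | succ m ih =>
    have := cauchy hΦ (hΦ.starPow m) sΦ ih.1
    refine ⟨this.1, ?_, ?_⟩
    · rw [pow_succ', ← ih.2.1]; exact this.2.1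
    · rw [pow_succ']
      refine this.2.2.trans ?_
      gcongr
      exact ih.2.2

theorem exp_sum {Φ : CF E} (h0 : Φ 0 = 0) (hΦ : Intg ν Φ) (sΦ : Summable fun n => ‖(-1:ℝ)^n * cf ν Φ n‖) :
    (∑' n, (-1:ℝ)^n * cf ν (starExp Φ) n) = Real.exp (∑' n, (-1:ℝ)^n * cf ν Φ n) := by
  set f : ℕ → ℕ → ℝ := fun m n => ((m.factorial:ℝ))⁻¹ * ((-1:ℝ)^n * cf ν (starPow Φ m) n) with hf
  have hs : Summable (Function.uncurry f) := by
    apply Summable.of_norm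
    rw [summable_prod_of_nonneg (fun _ => norm_nonneg _)]
    constructor
    · intro m
      simp only [Function.uncurry, hf, norm_mul _ ((-1:ℝ)^_ * _)]
      exact (pow_sum hΦ sΦ m).1.mul_left _
    · simp only [Function.uncurry, hf, norm_mul _ ((-1:ℝ)^_ * _)]
      refine Summable.of_nonneg_of_le (fun m => tsum_nonneg fun n => by positivity) (fun m => ?_)
        (Real.summable_pow_div_factorial (∑' n, ‖(-1:ℝ)^n * cf ν Φ n‖))
      rw [tsum_mul_left, div_eq_inv_mul]
      simp only [norm_inv, Real.norm_natCast]
      gcongr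
      exact (pow_sum hΦ sΦ m).2.2
  have h1 : ∀ n, (-1:ℝ)^n * cf ν (starExp Φ) n = ∑' m, f m n := by
    intro n
    rw [tsum_eq_sum (s := Finset.range (n+1))]
    · simp only [hf, cf, starExp]
      rw [integral_finsetSum _ fun m _ => ((hΦ.starPow m) n).const_mul _, Finset.mul_sum, Finset.mul_sum]
      refine Finset.sum_congr rfl fun m _ => ?_
      rw [integral_const_mul]; ring
    · intro m hm
      have : starPow Φ m n = 0 := by
        funext x; exact starPow_eq_zero Φ h0 m n (by simp only [Finset.mem_range] at hm; omega) x
      simp [hf, cf, this]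
  simp only [h1]
  rw [Summable.tsum_comm hs, Real.exp_eq_exp_ℝ, NormedSpace.exp_eq_tsum_div]
  refine tsum_congr fun m => ?_
  simp only [hf]
  rw [tsum_mul_left, (pow_sum hΦ sΦ m).2.1, div_eq_inv_mul]

end CF
namespace CF

theorem ball_cover (d k : ℕ) : AECover (piVol d k) Filter.atTop
    (fun R : ℝ => Set.pi Set.univ fun _ : Fin k => Metric.ball (0 : Euc d) R) := by
  constructor
  · refine Filter.Eventually.of_forall fun x => ?_
    filter_upwards [Filter.eventually_gt_atTop ‖x‖] with R hR i _
    rw [mem_ball_zero_iff]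
    exact (norm_le_pi_norm x i).trans_lt hR
  · intro R
    exact MeasurableSet.univ_pi fun _ => Metric.isOpen_ball.measurableSet

theorem piRestrict_eq (d k : ℕ) (Λ : Set (Euc d)) :
    (Measure.pi fun _ : Fin k => (volume : Measure (Euc d)).restrict Λ) =
      (piVol d k).restrict (Set.pi Set.univ fun _ => Λ) := by
  rw [piVol, Measure.restrict_pi_pi]

theorem Intg.restrict {d : ℕ} {Φ : CF (Euc d)} (h : Intg volume Φ) (Λ : Set (Euc d)) :
    Intg (volume.restrict Λ) Φ := by
  intro n
  rw [piRestrict_eq]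
  exact (h n).restrict

theorem cf_restrict_le {d : ℕ} {Φ : CF (Euc d)} (h : Intg volume Φ) (Λ : Set (Euc d)) (k : ℕ) :
    |cf (volume.restrict Λ) Φ k| ≤ cf volume (fun n x => |Φ n x|) k := by
  unfold cf
  rw [abs_mul, abs_of_nonneg (by positivity : (0:ℝ) ≤ ((k.factorial:ℝ))⁻¹), piRestrict_eq]
  gcongr
  refine (abs_integral_le_integral_abs).trans ?_
  exact setIntegral_le_integral (h k).abs (Filter.Eventually.of_forall fun x => abs_nonneg _)

theorem cf_tendsto {d : ℕ} {Φ : CF (Euc d)} (h : Intg volume Φ) (k : ℕ) :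
    Filter.Tendsto (fun R : ℝ => cf (volume.restrict (Metric.ball 0 R)) Φ k) Filter.atTop
      (nhds (cf volume Φ k)) := by
  unfold cf
  apply Filter.Tendsto.const_mul
  simp only [piRestrict_eq]
  exact (ball_cover d k).integral_tendsto_of_countably_generated (h k)

theorem tail_int {d : ℕ} (k : ℕ) (f : (Fin k → Euc d) → ℝ) (hf : Measurable f) (B : ℝ) (hB : 0 ≤ B)
    (h : ∀ R : ℝ, ∫⁻ y, ENNReal.ofReal |f y| ∂(piRestrict d (Metric.ball 0 R) k) ≤ ENNReal.ofReal B) :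
    Integrable f (piVol d k) ∧ ∫ x, |f x| ∂(piVol d k) ≤ B := by
  have h' : ∀ R : ℝ, ∫⁻ y in (Set.pi Set.univ fun _ : Fin k => Metric.ball (0 : Euc d) R), ‖f y‖ₑ ∂(piVol d k)
      ≤ ENNReal.ofReal B := by
    intro R
    rw [← piRestrict_eq]
    simp only [← ofReal_norm, Real.norm_eq_abs]
    exact h R
  have hi : Integrable f (piVol d k) :=
    (ball_cover d k).integrable_of_lintegral_enorm_bounded' B.toNNReal hf.aestronglyMeasurable
      (Filter.Eventually.of_forall h')
  refine ⟨hi, ?_⟩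
  refine le_of_tendsto ((ball_cover d k).integral_tendsto_of_countably_generated hi.abs)
    (Filter.Eventually.of_forall fun R => ?_)
  have := integral_norm_eq_lintegral_enorm (f := f) (μ := (piVol d k).restrict
    (Set.pi Set.univ fun _ : Fin k => Metric.ball (0 : Euc d) R)) hf.aestronglyMeasurable
  simp only [Real.norm_eq_abs] at this
  rw [this]
  exact ENNReal.toReal_le_of_le_ofReal hB (h' R)

theorem CF_cast {E : Type} (ρ : CF E) {m n : ℕ} (h : m = n) (x : Fin n → E) :
    ρ m (x ∘ Fin.cast h) = ρ n x := by
  subst h; rfl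

theorem janossy_zero (d : ℕ) (ρ : CF (Euc d)) (Λ : Set (Euc d)) :
    janossy d ρ Λ 0 ![] = ∑' k, (-1:ℝ)^k * cf (volume.restrict Λ) ρ k := by
  unfold janossy cf
  refine tsum_congr fun k => ?_
  rw [div_eq_mul_inv, mul_assoc]
  congr 2
  refine integral_congr_ae (Filter.Eventually.of_forall fun y => ?_)
  dsimp only
  rw [Fin.append_left_nil _ _ rfl, CF_cast ρ]

theorem janossy_one (d : ℕ) (ρ : CF (Euc d)) (Λ : Set (Euc d)) (x : Euc d) :
    janossy d ρ Λ 1 ![x] = ∑' k, (-1:ℝ)^k * cf (volume.restrict Λ) (D x ρ) k := by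
  unfold janossy cf
  refine tsum_congr fun k => ?_
  rw [div_eq_mul_inv, mul_assoc]
  congr 2
  refine integral_congr_ae (Filter.Eventually.of_forall fun y => ?_)
  dsimp only
  rw [Fin.append_left_eq_cons, CF_cast ρ]
  rfl

theorem rho_summable {d : ℕ} (ρ : CF (Euc d)) (ξ : ℝ) (hm : ∀ n, Measurable (ρ n))
    (h0 : ∀ n x, 0 ≤ ρ n x) (h1 : ∀ n x, ρ n x ≤ ξ^n) (Λ : Set (Euc d)) (hΛ : volume Λ < ⊤) :
    Intg (volume.restrict Λ) ρ ∧ Summable (fun n => ‖(-1:ℝ)^n * cf (volume.restrict Λ) ρ n‖) := by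
  have : IsFiniteMeasure ((volume : Measure (Euc d)).restrict Λ) := ⟨by simpa using hΛ⟩
  have hb : ∀ n x, ‖ρ n x‖ ≤ ξ^n := fun n x => by
    rw [Real.norm_eq_abs, abs_of_nonneg (h0 n x)]; exact h1 n x
  constructor
  · intro n
    exact Integrable.of_bound (hm n).aestronglyMeasurable (ξ^n) (Filter.Eventually.of_forall (hb n))
  · refine Summable.of_nonneg_of_le (fun _ => norm_nonneg _) (fun n => ?_)
      (Real.summable_pow_div_factorial (ξ * (volume Λ).toReal))
    rw [norm_mul, norm_pow, norm_neg, norm_one, one_pow, one_mul, cf, norm_mul, norm_inv, Real.norm_natCast,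
      div_eq_inv_mul]
    gcongr
    refine (norm_integral_le_of_norm_le_const (Filter.Eventually.of_forall (hb n))).trans ?_
    rw [mul_pow, Measure.real, Measure.pi_univ]
    simp

end CF

open CF MeasureTheory in
/-- Theorem 3.1, expansion of the chemical potential. -/
theorem chemical_potential_expansion (d : ℕ) (hd : 1 ≤ d)
    (M A : ℝ) (hM : 0 < M) (hA : 0 < A) :
    ∃ D₀ > (0 : ℝ),
      ∀ (Dρ μ ξ r : ℝ) (ρ ρT ω0 : CF (Euc d)),
        0 < Dρ → Dρ ≤ D₀ → 0 < ξ → 0 < r →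
        ρ 0 = 1 → IsSymm ρ → (∀ n, Measurable (ρ n)) →
        (∀ n x, 0 ≤ ρ n x) →
        -- Ruelle bound
        (∀ (n : ℕ) (x : Fin n → Euc d), ρ n x ≤ ξ ^ n) →
        -- translation invariance
        (∀ (n : ℕ) (a : Euc d) (x : Fin n → Euc d), ρ n (fun i => x i + a) = ρ n x) →
        -- constant density
        (∀ x : Euc d, ρ 1 ![x] = r) →
        ρT 0 = 0 → IsSymm ρT → starExp ρT = ρ →
        ω0 0 = 0 → IsSymm ω0 → D (0 : Euc d) ρT = r • starExp ω0 →
        -- Assumption A for n = 1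
        (∀ Δ : Set (Euc d), Bornology.IsBounded Δ →
          ∀ ε > (0 : ℝ), ∃ R₀ : ℝ, ∀ R ≥ R₀, ∀ x ∈ Δ,
            |janossy d ρ (Metric.ball 0 R) 1 ![x] /
                janossy d ρ (Metric.ball 0 R) 0 ![] - Real.exp μ| ≤ ε) →
        -- Assumption B for m = 1
        (∀ Λ : Set (Euc d), Bornology.IsBounded Λ → MeasurableSet Λ →
          ∀ (k : ℕ), 1 ≤ k → ∀ x : Euc d,
            ∫⁻ y, ENNReal.ofReal |ρT (k + 1) (Fin.cons x y)| ∂(piRestrict d Λ k) ≤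
              ENNReal.ofReal (k.factorial * M * A * Dρ ^ k * r)) →
        Summable (fun k : ℕ =>
          |(-1 : ℝ) ^ k / k.factorial * ∫ y, ω0 k y ∂(piVol d k)|) ∧
        μ = Real.log r +
          ∑' k : ℕ, (-1 : ℝ) ^ k / k.factorial * ∫ y, ω0 k y ∂(piVol d k) := by
  have hC : 0 < M * A := by positivity
  refine ⟨1 / (2 * (1 + 2 * (M * A))), by positivity, ?_⟩
  intro Dρ μ ξ r ρ ρT ω0 hD hD0 hξ hr hρ0 _ hρm hρnn hρb _ hρ1 hT0 _ hTe hω0 _ hω hA' hB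
  have hq : Dρ * (1 + 2 * (M * A)) ≤ 1/2 := by
    rw [le_div_iff₀ (by positivity)] at hD0; linarith
  have hq0 : 0 ≤ Dρ * (1 + 2 * (M * A)) := by positivity
  have hD1 : Dρ < 1 := by nlinarith
  -- measurability of ρT
  have hTm : ∀ n, Measurable (ρT n) := measurable_of_starExp ρT hT0 (by rw [hTe]; exact hρm)
  have hDm : ∀ n, Measurable (D (0 : Euc d) ρT n) := by
    intro n
    refine (hTm (n+1)).comp ?_
    rw [measurable_pi_iff]
    intro i
    refine Fin.cases ?_ (fun i => ?_) i
    · simp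
    · simpa using measurable_pi_apply i
  have hk : ∀ k, 1 ≤ k → Integrable (D (0 : Euc d) ρT k) (piVol d k) ∧
      ∫ x, |D (0 : Euc d) ρT k x| ∂(piVol d k) ≤ k.factorial * M * A * Dρ ^ k * r := by
    intro k hk
    exact tail_int k _ (hDm k) _ (by positivity)
      (fun R => hB _ Metric.isBounded_ball Metric.isOpen_ball.measurableSet k hk 0)
  have hTI : Intg volume (D (0 : Euc d) ρT) := by
    intro k
    rcases Nat.eq_zero_or_pos k with rfl | h
    · rw [Measure.pi_of_empty]
      exact Integrable.of_finite
    · exact (hk k h).1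
  have hcT : ∀ k, 1 ≤ k → cf volume (fun n x => |D (0 : Euc d) ρT n x|) k ≤ M * A * Dρ ^ k * r := by
    intro k h
    unfold cf
    rw [inv_mul_le_iff₀ (by positivity)]
    refine (hk k h).2.trans_eq (by ring)
  have hEe : starExp ω0 = r⁻¹ • D (0 : Euc d) ρT := by
    rw [hω, smul_smul, inv_mul_cancel₀ hr.ne', one_smul]
  have hEI : Intg volume (starExp ω0) := by
    intro k; rw [hEe]; exact (hTI k).const_mul _
  have hcE : ∀ k, 1 ≤ k → cf volume (fun n x => |starExp ω0 n x|) k ≤ (M * A) * Dρ ^ k := by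
    intro k h
    have h1 := hcT k h
    have : cf volume (fun n x => |starExp ω0 n x|) k =
        r⁻¹ * cf volume (fun n x => |D (0 : Euc d) ρT n x|) k := by
      unfold cf
      rw [hEe]
      simp only [Pi.smul_apply, smul_eq_mul, abs_mul, abs_inv, abs_of_pos hr, integral_const_mul]
      ring
    rw [this, inv_mul_le_iff₀ hr]
    linarith
  have hωI : Intg volume ω0 := Intg.of_starExp ω0 hω0 hEI
  have hωb := omega_bound ω0 hω0 hEI (M * A) Dρ hC.le hD.le hcE
  have hgeo : Summable (fun n : ℕ => (Dρ * (1 + 2 * (M * A)))^n) :=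
    summable_geometric_of_lt_one hq0 (by linarith)
  have hωR : ∀ Λ : Set (Euc d), ∀ n, ‖(-1:ℝ)^n * cf (volume.restrict Λ) ω0 n‖ ≤
      (Dρ * (1 + 2 * (M * A)))^n := by
    intro Λ n
    rw [norm_mul, norm_pow, norm_neg, norm_one, one_pow, one_mul]
    exact (cf_restrict_le hωI Λ n).trans (hωb n)
  have hωU : ∀ n, ‖(-1:ℝ)^n * cf volume ω0 n‖ ≤ (Dρ * (1 + 2 * (M * A)))^n := by
    intro n
    have := hωR Set.univ n
    rwa [Measure.restrict_univ] at this
  have hcfe : ∀ k : ℕ, (-1 : ℝ) ^ k / k.factorial * ∫ y, ω0 k y ∂(piVol d k) =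
      (-1:ℝ)^k * cf volume ω0 k := by
    intro k; unfold cf piVol; rw [div_eq_mul_inv, mul_assoc]
  simp only [hcfe]
  refine ⟨Summable.of_nonneg_of_le (fun _ => abs_nonneg _) hωU hgeo, ?_⟩
  -- limit
  have lim1 : Filter.Tendsto (fun R : ℝ => ∑' n, (-1:ℝ)^n * cf (volume.restrict (Metric.ball (0 : Euc d) R)) ω0 n)
      Filter.atTop (nhds (∑' n, (-1:ℝ)^n * cf volume ω0 n)) :=
    tendsto_tsum_of_dominated_convergence hgeo (fun n => (cf_tendsto hωI n).const_mul _)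
      (Filter.Eventually.of_forall fun R => hωR _)
  have lim2 : Filter.Tendsto (fun R : ℝ => r * Real.exp
      (∑' n, (-1:ℝ)^n * cf (volume.restrict (Metric.ball (0 : Euc d) R)) ω0 n))
      Filter.atTop (nhds (r * Real.exp (∑' n, (-1:ℝ)^n * cf volume ω0 n))) :=
    (lim1.rexp).const_mul r
  have eqT : ∀ R : ℝ, ∑' n, (-1:ℝ)^n * cf (volume.restrict (Metric.ball (0 : Euc d) R)) (D 0 ρT) n =
      r * Real.exp (∑' n, (-1:ℝ)^n * cf (volume.restrict (Metric.ball (0 : Euc d) R)) ω0 n) := by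
    intro R
    rw [← exp_sum hω0 (hωI.restrict _) (Summable.of_nonneg_of_le (fun _ => norm_nonneg _) (hωR _) hgeo),
      ← tsum_mul_left]
    refine tsum_congr fun n => ?_
    rw [hω]
    simp only [cf, Pi.smul_apply, smul_eq_mul, integral_const_mul]
    ring
  have sT : ∀ R : ℝ, Summable fun n => ‖(-1:ℝ)^n * cf (volume.restrict (Metric.ball (0 : Euc d) R)) (D 0 ρT) n‖ := by
    intro R
    rw [← summable_nat_add_iff 1]
    have hg : Summable (fun n : ℕ => M * A * Dρ ^ (n+1) * r) :=
      (((summable_nat_add_iff 1).2 (summable_geometric_of_lt_one hD.le hD1)).mul_left _).mul_right _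
    refine Summable.of_nonneg_of_le (fun _ => norm_nonneg _) (fun n => ?_) hg
    rw [norm_mul, norm_pow, norm_neg, norm_one, one_pow, one_mul]
    exact (cf_restrict_le hTI _ _).trans (hcT _ (by omega))
  have jan : ∀ R : ℝ, janossy d ρ (Metric.ball 0 R) 1 ![0] =
      (r * Real.exp (∑' n, (-1:ℝ)^n * cf (volume.restrict (Metric.ball (0 : Euc d) R)) ω0 n)) *
        janossy d ρ (Metric.ball 0 R) 0 ![] := by
    intro R
    have hρs := rho_summable ρ ξ hρm hρnn hρb (Metric.ball 0 R) measure_ball_lt_top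
    have hDρ := D_starExp (0 : Euc d) ρT hT0
    rw [hTe] at hDρ
    rw [janossy_one, janossy_zero, ← eqT, hDρ]
    exact (cauchy (hTI.restrict _) hρs.1 (sT R) hρs.2).2.1
  have lim3 : Filter.Tendsto (fun R : ℝ => janossy d ρ (Metric.ball 0 R) 1 ![0] /
      janossy d ρ (Metric.ball 0 R) 0 ![]) Filter.atTop (nhds (Real.exp μ)) := by
    rw [Metric.tendsto_atTop]
    intro ε hε
    obtain ⟨R₀, h⟩ := hA' {0} Bornology.isBounded_singleton (ε/2) (by positivity)
    refine ⟨R₀, fun R hR => ?_⟩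
    rw [Real.dist_eq]
    exact (h R hR 0 rfl).trans_lt (by linarith)
  have ev : ∀ᶠ R : ℝ in Filter.atTop, janossy d ρ (Metric.ball 0 R) 1 ![0] /
      janossy d ρ (Metric.ball 0 R) 0 ![] = r * Real.exp
      (∑' n, (-1:ℝ)^n * cf (volume.restrict (Metric.ball (0 : Euc d) R)) ω0 n) := by
    filter_upwards [lim3.eventually (lt_mem_nhds (Real.exp_pos μ))] with R hR
    have hne : janossy d ρ (Metric.ball 0 R) 0 ![] ≠ 0 := by
      intro h0; rw [h0, div_zero] at hR; exact lt_irrefl _ hR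
    rw [jan R, mul_div_assoc, div_self hne, mul_one]
  have := tendsto_nhds_unique (lim3.congr' ev) lim2
  have h := congrArg Real.log this
  rwa [Real.log_exp, Real.log_mul hr.ne' (Real.exp_pos _).ne', Real.log_exp] at h
end
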